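/- Let W(x) = x², fix ν > 0 and Λ = (0, L), so that λ_m^0(h) = 2(2m+1+ν)h. For each integer m ≥ 0 there exist constants C, δ > 0 such that for all h, L > 0 with h·L⁻² < δ: |λ_m^Λ(h) − 2(2m+1+ν)h − T(h,L)| ≤ C·(h·L⁻²)·T(h,L), where T(h,L) = [4/(m!·Γ(1+m+ν))]·h^{−2m−ν}·L^{2(2m+1+ν)}·e^{−L²/h}. -/

import Mathlib

open MeasureTheory Set Filter

/-- `w` generates an eigenfunction `u(x) = x^(1/2+ν)·w(x)` of the Dirichlet
realization `Q_Λ(ν;h) = h²D_x² + h²(ν²-1/4)x⁻² + W` on `Λ = (0,L)` with eigenvalue `lam`. -/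
def IsEigenfunctionQD (W : ℝ → ℝ) (ν L h lam : ℝ) (w : ℝ → ℝ) : Prop :=
  ContDiffOn ℝ 2 w (Set.Icc 0 L) ∧
  (∃ x ∈ Set.Ioc 0 L, x ^ ((1:ℝ)/2 + ν) * w x ≠ 0) ∧
  L ^ ((1:ℝ)/2 + ν) * w L = 0 ∧
  ∀ x ∈ Set.Ioo 0 L,
    -(h ^ 2) * deriv (deriv (fun y : ℝ => y ^ ((1:ℝ)/2 + ν) * w y)) x
      + h ^ 2 * (ν ^ 2 - 1/4) * (x ^ 2)⁻¹ * (x ^ ((1:ℝ)/2 + ν) * w x)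
      + W x * (x ^ ((1:ℝ)/2 + ν) * w x)
      = lam * (x ^ ((1:ℝ)/2 + ν) * w x)

/-- `lam` is an eigenvalue of `Q_Λ(ν;h)`. -/
def IsEigQD (W : ℝ → ℝ) (ν L h lam : ℝ) : Prop :=
  ∃ w : ℝ → ℝ, IsEigenfunctionQD W ν L h lam w

/-- `lam` is the `m`-th element of `S` in increasing order (counting from `m = 0`). -/
def IsNthEig (S : Set ℝ) (m : ℕ) (lam : ℝ) : Prop :=
  lam ∈ S ∧ {x ∈ S | x < lam}.Finite ∧ {x ∈ S | x < lam}.ncard = m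

/-!
Writing `u(x) = x^(1/2+ν) e^(-z/2) M(z)` with `z = x² / h` turns the eigenvalue equation into
Kummer's equation, so the eigenvalues are the numbers `4hs + 2h(1 + ν)` with
`M(-s, 1 + ν, L² / h) = 0`. At `s = k + e` with `|e| ≤ 1/2`, Kummer's series is, up to sign, a head
of degree `k` minus `e` times a tail. At `e = 0` the head is asymptotic to `zᵏ / (1 + ν)ₖ` and the
tail to `k! M(1, 1 + ν, z) / zᵏ⁺¹ ∼ k! Γ(1 + ν) e^z / z^(k+1+ν)`. Hence head over tail is an
exponentially small contraction in `e`. Its unique fixed point is the only zero with `|s - k| ≤ 1/2`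
and equals the value at `e = 0` up to a factor `1 + O(1/z)`. There are no zeros with `s ≤ 0`, where
`M ≥ 1`, so these fixed points enumerate the spectrum from below.
-/

open Topology Asymptotics

/-! ### Rising factorials -/

local notation "poch(" x "," n ")" => Polynomial.eval x (ascPochhammer ℝ n)

lemma ascPochhammer_eval_succ_left (x : ℝ) (n : ℕ) : poch(x, n + 1) = x * poch(x + 1, n) := by
  simp [ascPochhammer_succ_left]

lemma ascPochhammer_eval_add (x : ℝ) (m n : ℕ) :
    poch(x, m + n) = poch(x, m) * poch(x + m, n) := by
  simp [← ascPochhammer_mul]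

lemma ascPochhammer_eval_two (n : ℕ) : poch((2 : ℝ), n) = (n + 1).factorial := by
  rw [← ascPochhammer_eval_one, ascPochhammer_eval_succ_left, one_mul, one_add_one_eq_two]

lemma ascPochhammer_eval_mono {x y : ℝ} (hx : 0 < x) (hxy : x ≤ y) (n : ℕ) :
    poch(x, n) ≤ poch(y, n) := by
  induction n with
  | zero => simp
  | succ n ih =>
    simp only [ascPochhammer_succ_eval]
    have := ascPochhammer_pos n y (hx.trans_le hxy)
    gcongr

lemma factorial_le_ascPochhammer_eval {b : ℝ} (hb : 1 ≤ b) (n : ℕ) :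
    (n.factorial : ℝ) ≤ poch(b, n) :=
  (ascPochhammer_eval_one ℝ n).symm.trans_le (ascPochhammer_eval_mono one_pos hb n)

lemma one_le_ascPochhammer_eval {b : ℝ} (hb : 1 ≤ b) (n : ℕ) : 1 ≤ poch(b, n) :=
  le_trans (mod_cast n.factorial_pos) (factorial_le_ascPochhammer_eval hb n)

lemma pow_le_ascPochhammer_eval {x : ℝ} (hx : 0 < x) (n : ℕ) : x ^ n ≤ poch(x, n) := by
  induction n with
  | zero => simp
  | succ n ih =>
    rw [pow_succ, ascPochhammer_succ_eval]
    have := ascPochhammer_pos n x hx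
    gcongr
    exact le_add_of_nonneg_right n.cast_nonneg

lemma factorial_div_le_ascPochhammer_eval_half (n : ℕ) :
    (n.factorial : ℝ) / (2 * (n + 1)) ≤ poch((1 / 2 : ℝ), n) := by
  induction n with
  | zero => norm_num
  | succ n ih =>
    rw [ascPochhammer_succ_eval]
    refine le_trans ?_ (mul_le_mul_of_nonneg_right ih (by positivity))
    rw [Nat.factorial_succ, div_mul_eq_mul_div, div_le_div_iff₀ (by positivity) (by positivity)]
    push_cast
    have : ((n : ℝ) + 1) * (2 * (n + 1)) ≤ (1 / 2 + n) * (2 * (n + 1 + 1)) := by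
      nlinarith [n.cast_nonneg (α := ℝ)]
    linear_combination (n.factorial : ℝ) * this

lemma ascPochhammer_eval_neg_add (k : ℕ) (e : ℝ) :
    poch(-(k + e), k) = (-1) ^ k * poch(1 + e, k) := by
  rw [ascPochhammer_eval_neg_eq_descPochhammer, descPochhammer_eval_eq_ascPochhammer]
  ring_nf

lemma Gamma_add_natCast {b : ℝ} (hb : 0 < b) (n : ℕ) :
    Real.Gamma (b + n) = Real.Gamma b * poch(b, n) := by
  induction n with
  | zero => simp
  | succ n ih =>
    rw [ascPochhammer_succ_eval, Nat.cast_succ, ← add_assoc,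
      Real.Gamma_add_one (by positivity), ih]
    ring

lemma abs_ascPochhammer_eval_le {x c : ℝ} (hx : |x| ≤ c) (n : ℕ) : |poch(x, n)| ≤ poch(c, n) := by
  induction n with
  | zero => simp
  | succ n ih =>
    have hxn : |x + n| ≤ c + n := (abs_add_le x n).trans (by simpa using hx)
    rw [ascPochhammer_succ_eval, ascPochhammer_succ_eval, abs_mul]
    exact mul_le_mul ih hxn (abs_nonneg _) ((abs_nonneg _).trans ih)

lemma abs_ascPochhammer_eval_sub_le {x y c : ℝ} (hc : 1 ≤ c) (hx : |x| ≤ c) (hy : |y| ≤ c)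
    (n : ℕ) : |poch(x, n) - poch(y, n)| ≤ n * poch(c, n) * |x - y| := by
  induction n with
  | zero => simp
  | succ n ih =>
    have hxn : |x + n| ≤ c + n := (abs_add_le x n).trans (by simpa using hx)
    have hyn := abs_ascPochhammer_eval_le hy n
    have hcn : 0 ≤ poch(c, n) := (abs_nonneg _).trans hyn
    have hc1 : 1 ≤ c + n := hc.trans (le_add_of_nonneg_right n.cast_nonneg)
    simp only [ascPochhammer_succ_eval]
    calc |poch(x, n) * (x + n) - poch(y, n) * (y + n)|
        = |(poch(x, n) - poch(y, n)) * (x + n) + poch(y, n) * (x - y)| := by ring_nf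
      _ ≤ |poch(x, n) - poch(y, n)| * |x + n| + |poch(y, n)| * |x - y| := by
        rw [← abs_mul, ← abs_mul]
        exact abs_add_le _ _
      _ ≤ n * poch(c, n) * |x - y| * (c + n) + poch(c, n) * (c + n) * |x - y| := by
        gcongr
        exact hyn.trans (le_mul_of_one_le_right hcn hc1)
      _ = (n + 1 : ℕ) * (poch(c, n) * (c + n)) * |x - y| := by push_cast; ring

lemma exists_ascPochhammer_eval_add_le {d : ℝ} (hd : 0 ≤ d) (r : ℕ) :
    ∃ C, 0 ≤ C ∧ ∀ x, 1 ≤ x → poch(x + d, r) ≤ poch(x, r) * (1 + C / x) := by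
  induction r with
  | zero => exact ⟨0, le_rfl, fun x _ => by simp⟩
  | succ r ih =>
    obtain ⟨C, hC, h⟩ := ih
    refine ⟨C + d + C * d, by positivity, fun x hx => ?_⟩
    have hx0 : 0 < x := by linarith
    have hpoch := ascPochhammer_pos r x hx0
    have hfactor : x + d + r ≤ (x + r) * (1 + d / x) := by
      have : (x + r) * (1 + d / x) = x + d + r + r * d / x := by field_simp; ring
      rw [this]
      exact le_add_of_nonneg_right (by positivity)
    rw [ascPochhammer_succ_eval, ascPochhammer_succ_eval]
    calc poch(x + d, r) * (x + d + r)
        ≤ poch(x, r) * (1 + C / x) * ((x + r) * (1 + d / x)) := by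
          gcongr
          exact h x hx
      _ = poch(x, r) * (x + r) * (1 + C / x + d / x + C * d / x * (1 / x)) := by ring
      _ ≤ poch(x, r) * (x + r) * (1 + C / x + d / x + C * d / x * 1) := by
          gcongr
          rwa [div_le_one hx0]
      _ = poch(x, r) * (x + r) * (1 + (C + d + C * d) / x) := by ring

/-! ### Kummer's function -/

/-- The coefficient `(a)ₙ / ((b)ₙ n!)` of Kummer's series; it is `0` from the first `n` with
`(b)ₙ = 0` on. -/
noncomputable def kummerCoeff (a b : ℝ) (n : ℕ) : ℝ := poch(a, n) / (poch(b, n) * n.factorial)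

/-- Kummer's confluent hypergeometric function `M(a, b, z) = ₁F₁(a; b; z)`. -/
noncomputable def kummerM (a b z : ℝ) : ℝ := ∑' n, kummerCoeff a b n * z ^ n

section Kummer

variable (a b z : ℝ) (n : ℕ)

@[simp]
lemma kummerCoeff_zero : kummerCoeff a b 0 = 1 := by simp [kummerCoeff]

lemma kummerCoeff_one_left : kummerCoeff 1 b n = (poch(b, n))⁻¹ := by
  rw [kummerCoeff, ascPochhammer_eval_one, div_mul_cancel_right₀ (by positivity)]

lemma kummerCoeff_succ :
    kummerCoeff a b (n + 1) = (a + n) / (b + n) / (n + 1) * kummerCoeff a b n := by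
  rw [kummerCoeff, kummerCoeff, ascPochhammer_succ_eval, ascPochhammer_succ_eval,
    Nat.factorial_succ, div_div, div_mul_div_comm]
  push_cast
  ring

lemma succ_mul_kummerCoeff_succ :
    (n + 1) * kummerCoeff a b (n + 1) = a / b * kummerCoeff (a + 1) (b + 1) n := by
  rw [kummerCoeff, kummerCoeff, ascPochhammer_eval_succ_left, ascPochhammer_eval_succ_left,
    Nat.factorial_succ, div_mul_div_comm, mul_div_assoc']
  push_cast
  rw [show b * poch(b + 1, n) * ((n + 1) * n.factorial)
      = (n + 1) * (b * (poch(b + 1, n) * n.factorial)) by ring,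
    mul_div_mul_left _ _ (by positivity)]

lemma summable_kummerCoeff_mul_pow : Summable fun n => kummerCoeff a b n * z ^ n := by
  have hratio : Tendsto (fun n : ℕ => (a + n) / (b + n) * (z / ((n : ℝ) + 1))) atTop (𝓝 0) := by
    have h1 := tendsto_add_mul_div_add_mul_atTop_nhds a b 1 (one_ne_zero (α := ℝ))
    have h2 := tendsto_const_div_atTop_nhds_zero_nat z
    simpa using h1.mul ((tendsto_add_atTop_iff_nat 1).2 h2)
  refine summable_of_ratio_norm_eventually_le (r := 1 / 2) (by norm_num) ?_
  filter_upwards [hratio.norm.eventually_le_const (by norm_num : ‖(0 : ℝ)‖ < 1 / 2)] with n hn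
  calc ‖kummerCoeff a b (n + 1) * z ^ (n + 1)‖
      = ‖(a + n) / (b + n) * (z / (n + 1))‖ * ‖kummerCoeff a b n * z ^ n‖ := by
        rw [← norm_mul, kummerCoeff_succ]
        ring_nf
    _ ≤ 1 / 2 * ‖kummerCoeff a b n * z ^ n‖ := by gcongr

lemma hasSum_kummerM : HasSum (fun n => kummerCoeff a b n * z ^ n) (kummerM a b z) :=
  (summable_kummerCoeff_mul_pow a b z).hasSum

lemma hasSum_kummerM_sub_one :
    HasSum (fun n => kummerCoeff a b (n + 1) * z ^ (n + 1)) (kummerM a b z - 1) := by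
  simpa using (hasSum_nat_add_iff' 1).2 (hasSum_kummerM a b z)

@[simp]
lemma kummerM_zero_right : kummerM a b 0 = 1 := by
  simpa [sub_eq_zero] using (hasSum_kummerM_sub_one a b 0).tsum_eq.symm

lemma hasDerivAt_kummerM :
    HasDerivAt (kummerM a b) (a / b * kummerM (a + 1) (b + 1) z) z := by
  have hterm (n : ℕ) (y : ℝ) : HasDerivAt (fun y => kummerCoeff a b (n + 1) * y ^ (n + 1))
      (a / b * (kummerCoeff (a + 1) (b + 1) n * y ^ n)) y := by
    refine ((hasDerivAt_pow (n + 1) y).const_mul _).congr_deriv ?_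
    rw [← mul_assoc (a / b), ← succ_mul_kummerCoeff_succ]
    push_cast
    ring_nf
  have hbound : Summable fun n =>
      ‖a / b * (kummerCoeff (a + 1) (b + 1) n * (|z| + 1) ^ n)‖ :=
    ((summable_kummerCoeff_mul_pow (a + 1) (b + 1) (|z| + 1)).mul_left _).norm
  have hderiv := hasDerivAt_tsum_of_isPreconnected hbound
    (isOpen_Ioo (a := -(|z| + 1)) (b := |z| + 1)) isPreconnected_Ioo
    (fun n y _ => hterm n y)
    (fun n y hy => by
      simp only [norm_mul, norm_pow]
      gcongr
      exact (abs_lt.2 hy).le.trans (le_abs_self _))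
    (abs_lt.1 (by rw [abs_zero]; positivity : |(0 : ℝ)| < |z| + 1))
    (hasSum_kummerM_sub_one a b 0).summable
    (abs_lt.1 (lt_add_one |z|))
  have hsplit : kummerM a b = fun y => 1 + ∑' n, kummerCoeff a b (n + 1) * y ^ (n + 1) := by
    funext y
    rw [(hasSum_kummerM_sub_one a b y).tsum_eq]
    ring
  rw [hsplit, kummerM, ← tsum_mul_left]
  exact hderiv.const_add 1

lemma contDiff_kummerM (n : ℕ) : ContDiff ℝ n (kummerM a b) := by
  induction n generalizing a b with
  | zero =>
    exact contDiff_zero.2 (continuous_iff_continuousAt.2 fun z =>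
      (hasDerivAt_kummerM a b z).continuousAt)
  | succ n ih =>
    have hderiv : deriv (kummerM a b) = fun z => a / b * kummerM (a + 1) (b + 1) z :=
      funext fun z => (hasDerivAt_kummerM a b z).deriv
    rw [Nat.cast_succ, contDiff_succ_iff_deriv, hderiv]
    exact ⟨fun z => (hasDerivAt_kummerM a b z).differentiableAt, by simp,
      contDiff_const.mul (ih _ _)⟩

end Kummer

/-- Kummer's equation `z M'' + (b - z) M' = a M` after cancelling the factor `a / b` of
`hasDerivAt_kummerM`. -/
lemma kummerM_contiguous (a : ℝ) {b : ℝ} (hb : 0 < b) (z : ℝ) :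
    z * ((a + 1) / (b + 1)) * kummerM (a + 1 + 1) (b + 1 + 1) z
      + (b - z) * kummerM (a + 1) (b + 1) z = b * kummerM a b z := by
  have hlhs := (((hasSum_kummerM (a + 1 + 1) (b + 1 + 1) z).mul_left (z * ((a + 1) / (b + 1)))).add
    ((hasSum_kummerM_sub_one (a + 1) (b + 1) z).mul_left b)).sub
      ((hasSum_kummerM (a + 1) (b + 1) z).mul_left z)
  have hrhs := (hasSum_kummerM_sub_one a b z).mul_left b
  have hcoeff (n : ℕ) : (a + 1) / (b + 1) * kummerCoeff (a + 1 + 1) (b + 1 + 1) n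
      + b * kummerCoeff (a + 1) (b + 1) (n + 1) - kummerCoeff (a + 1) (b + 1) n
      = b * kummerCoeff a b (n + 1) := by
    have hshift := succ_mul_kummerCoeff_succ a b n
    rw [← succ_mul_kummerCoeff_succ (a + 1), kummerCoeff_succ (a + 1)]
    have : b + 1 + n ≠ 0 := by positivity
    field_simp at hshift ⊢
    linear_combination -(b + 1 + n) * hshift
  have hsum := hlhs.unique (hrhs.congr_fun fun n => by linear_combination z ^ (n + 1) * hcoeff n)
  linear_combination hsum

lemma kummerM_one_left_contiguous {b : ℝ} (hb : 0 < b) (z : ℝ) :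
    z * (1 / b * kummerM (1 + 1) (b + 1) z) + (b - 1) * (kummerM 1 b z - 1)
      = z * kummerM 1 b z := by
  have hlhs := (((hasSum_kummerM (1 + 1) (b + 1) z).mul_left (1 / b)).mul_left z).add
    ((hasSum_kummerM_sub_one 1 b z).mul_left (b - 1))
  refine hlhs.unique (((hasSum_kummerM 1 b z).mul_left z).congr_fun fun n => ?_)
  have hcoeff : kummerCoeff 1 b (n + 1) * (b + n) = kummerCoeff 1 b n := by
    rw [kummerCoeff_succ]
    field_simp
    ring
  rw [← mul_assoc (1 / b), ← succ_mul_kummerCoeff_succ]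
  linear_combination z ^ (n + 1) * hcoeff

lemma one_le_kummerM {a b z : ℝ} (ha : 0 ≤ a) (hb : 0 < b) (hz : 0 ≤ z) : 1 ≤ kummerM a b z := by
  have hcoeff (n : ℕ) : 0 ≤ kummerCoeff a b n := by
    have hpoch : 0 ≤ poch(a, n) := (abs_nonneg _).trans
      (abs_ascPochhammer_eval_le (abs_of_nonneg ha).le n)
    have := ascPochhammer_pos n b hb
    unfold kummerCoeff
    positivity
  simpa using (hasSum_kummerM_sub_one a b z).nonneg fun n =>
    mul_nonneg (hcoeff _) (pow_nonneg hz _)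

/-! ### The radial equation -/

lemma lipschitzOnWith_companion {P Q p q : ℝ} (hP : |P| ≤ p) (hQ : |Q| ≤ q) (s : Set (ℝ × ℝ)) :
    LipschitzOnWith (Real.toNNReal (1 + q + p)) (fun y : ℝ × ℝ => (y.2, Q * y.1 - P * y.2)) s := by
  have hp : 0 ≤ p := (abs_nonneg P).trans hP
  have hq : 0 ≤ q := (abs_nonneg Q).trans hQ
  refine LipschitzOnWith.of_dist_le_mul fun y _ y' _ => ?_
  have hfst : |(y - y').1| ≤ ‖y - y'‖ := norm_fst_le (y - y')
  have hsnd : |(y - y').2| ≤ ‖y - y'‖ := norm_snd_le (y - y')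
  rw [dist_eq_norm, dist_eq_norm, Real.coe_toNNReal _ (by positivity), Prod.norm_def]
  refine max_le ?_ ?_
  · calc |(y - y').2| ≤ 1 * ‖y - y'‖ := by rwa [one_mul]
      _ ≤ (1 + q + p) * ‖y - y'‖ := by gcongr; linarith
  · calc |Q * y.1 - P * y.2 - (Q * y'.1 - P * y'.2)|
        = |Q * (y - y').1 - P * (y - y').2| := by
          simp only [Prod.fst_sub, Prod.snd_sub]
          ring_nf
      _ ≤ |Q| * |(y - y').1| + |P| * |(y - y').2| := by
          rw [← abs_mul, ← abs_mul]
          exact abs_sub _ _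
      _ ≤ q * ‖y - y'‖ + p * ‖y - y'‖ := by gcongr
      _ ≤ (1 + q + p) * ‖y - y'‖ := by nlinarith [norm_nonneg (y - y')]

lemma eq_zero_of_linear_ode_of_eq_zero_right {P Q w w₁ : ℝ → ℝ} {a b : ℝ}
    (hP : ContinuousOn P (Icc a b)) (hQ : ContinuousOn Q (Icc a b))
    (hw : ∀ t ∈ Icc a b, HasDerivWithinAt w (w₁ t) (Icc a b) t)
    (hw₁ : ∀ t ∈ Icc a b, HasDerivWithinAt w₁ (Q t * w t - P t * w₁ t) (Icc a b) t)
    (hb : w b = 0) (hb₁ : w₁ b = 0) {t : ℝ} (ht : t ∈ Icc a b) : w t = 0 := by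
  obtain ⟨p, hp⟩ := isCompact_Icc.exists_bound_of_continuousOn hP
  obtain ⟨q, hq⟩ := isCompact_Icc.exists_bound_of_continuousOn hQ
  have hcurve : ∀ s ∈ Icc a b, HasDerivWithinAt (fun s => (w s, w₁ s))
      (w₁ s, Q s * w s - P s * w₁ s) (Icc a b) s := fun s hs => (hw s hs).prodMk (hw₁ s hs)
  have heq : EqOn (fun s => (w s, w₁ s)) (fun _ => 0) (Icc a b) :=
    ODE_solution_unique_of_mem_Icc_left (s := fun _ => univ)
      (v := fun s y => (y.2, Q s * y.1 - P s * y.2))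
      (fun s hs => lipschitzOnWith_companion (hp s (Ioc_subset_Icc_self hs))
        (hq s (Ioc_subset_Icc_self hs)) univ)
      (fun s hs => (hcurve s hs).continuousWithinAt)
      (fun s hs => (hcurve s (Ioc_subset_Icc_self hs)).mono_of_mem_nhdsWithin
        (Icc_mem_nhdsLE_of_mem hs))
      (fun _ _ => mem_univ _) continuousOn_const
      (fun s _ => (hasDerivWithinAt_const s (Iic s) 0).congr_deriv (by simp [Prod.ext_iff]))
      (fun _ _ => mem_univ _) (by simp [hb, hb₁])
  exact congrArg Prod.fst (heq ht)

/-- `w` solves the radial equation `w'' + (p / x) w' = Q w` on `(0, L]`, is twice differentiable up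
to the endpoints of `[0, L]`, and has the first and second derivatives `w₁` and `w₂`. -/
structure IsRadialSolution (p L : ℝ) (Q w w₁ w₂ : ℝ → ℝ) : Prop where
  hasDeriv : ∀ x ∈ Icc 0 L, HasDerivWithinAt w (w₁ x) (Icc 0 L) x
  hasDeriv₁ : ∀ x ∈ Icc 0 L, HasDerivWithinAt w₁ (w₂ x) (Icc 0 L) x
  equation : ∀ x ∈ Ioc 0 L, w₂ x + p / x * w₁ x = Q x * w x

namespace IsRadialSolution

variable {p L : ℝ} {Q w w₁ w₂ v v₁ v₂ : ℝ → ℝ}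

lemma hasDerivAt (hw : IsRadialSolution p L Q w w₁ w₂) {x : ℝ} (hx : x ∈ Ioo 0 L) :
    HasDerivAt w (w₁ x) x :=
  (hw.hasDeriv x (Ioo_subset_Icc_self hx)).hasDerivAt (Icc_mem_nhds hx.1 hx.2)

lemma hasDerivAt₁ (hw : IsRadialSolution p L Q w w₁ w₂) {x : ℝ} (hx : x ∈ Ioo 0 L) :
    HasDerivAt w₁ (w₂ x) x :=
  (hw.hasDeriv₁ x (Ioo_subset_Icc_self hx)).hasDerivAt (Icc_mem_nhds hx.1 hx.2)

lemma eq_zero_of_eq_zero_right (hQ : ContinuousOn Q (Ioc 0 L))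
    (hw : IsRadialSolution p L Q w w₁ w₂) (h0 : w L = 0) (h1 : w₁ L = 0) {x : ℝ}
    (hx : x ∈ Ioc 0 L) : w x = 0 := by
  have hsub : Icc x L ⊆ Ioc 0 L := fun t ht => ⟨hx.1.trans_le ht.1, ht.2⟩
  have hsub' : Icc x L ⊆ Icc 0 L := Icc_subset_Icc_left hx.1.le
  refine eq_zero_of_linear_ode_of_eq_zero_right (P := fun t => p / t) (Q := Q) (w₁ := w₁)
    (continuousOn_const.div continuousOn_id fun t ht => (hsub ht).1.ne') (hQ.mono hsub)
    (fun t ht => (hw.hasDeriv t (hsub' ht)).mono hsub') (fun t ht => ?_) h0 h1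
    (left_mem_Icc.2 hx.2)
  rw [← hw.equation t (hsub ht), add_sub_cancel_right]
  exact (hw.hasDeriv₁ t (hsub' ht)).mono hsub'

/-- `x ^ p` times the Wronskian is constant, and it vanishes at `0`. -/
lemma wronskian_right_eq_zero (hp : 0 < p) (hL : 0 < L) (hw : IsRadialSolution p L Q w w₁ w₂)
    (hv : IsRadialSolution p L Q v v₁ v₂) : w L * v₁ L - w₁ L * v L = 0 := by
  have hcont : ContinuousOn (fun x => x ^ p * (w x * v₁ x - w₁ x * v x)) (Icc 0 L) := by
    refine (Real.continuous_rpow_const hp.le).continuousOn.mul (.sub (.mul ?_ ?_) (.mul ?_ ?_))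
    exacts [fun x hx => (hw.hasDeriv x hx).continuousWithinAt,
      fun x hx => (hv.hasDeriv₁ x hx).continuousWithinAt,
      fun x hx => (hw.hasDeriv₁ x hx).continuousWithinAt,
      fun x hx => (hv.hasDeriv x hx).continuousWithinAt]
  have hderiv : ∀ x ∈ Ioo 0 L,
      HasDerivAt (fun x => x ^ p * (w x * v₁ x - w₁ x * v x)) 0 x := by
    intro x hx
    have hx0 : x ≠ 0 := hx.1.ne'
    have hw₂ := hw.equation x (Ioo_subset_Ioc_self hx)
    have hv₂ := hv.equation x (Ioo_subset_Ioc_self hx)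
    refine ((Real.hasDerivAt_rpow_const (Or.inl hx0)).mul (((hw.hasDerivAt hx).mul
      (hv.hasDerivAt₁ hx)).sub ((hw.hasDerivAt₁ hx).mul (hv.hasDerivAt hx)))).congr_deriv ?_
    simp only [Pi.sub_apply, Pi.mul_apply]
    rw [Real.rpow_sub_one hx0]
    linear_combination x ^ p * (w x * hv₂ - v x * hw₂)
  obtain ⟨_, -, hslope⟩ := exists_hasDerivAt_eq_slope _ (fun _ => 0) hL hcont hderiv
  rw [Real.zero_rpow hp.ne', zero_mul, sub_zero, sub_zero] at hslope
  have hLp : L ^ p ≠ 0 := (Real.rpow_pos_of_pos hL p).ne'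
  simpa [hL.ne', hLp] using hslope.symm

lemma comp_sq_div {b h : ℝ} {q g g₁ g₂ : ℝ → ℝ} (hh : h ≠ 0)
    (hg : ∀ z, HasDerivAt g (g₁ z) z) (hg₁ : ∀ z, HasDerivAt g₁ (g₂ z) z)
    (heq : ∀ z, z * g₂ z + b * g₁ z = q z * g z) (L : ℝ) :
    IsRadialSolution (2 * b - 1) L (fun x => 4 / h * q (x ^ 2 / h)) (fun x => g (x ^ 2 / h))
      (fun x => 2 * x / h * g₁ (x ^ 2 / h))
      (fun x => 2 / h * g₁ (x ^ 2 / h) + (2 * x / h) ^ 2 * g₂ (x ^ 2 / h)) := by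
  have hsq (x : ℝ) : HasDerivAt (fun x : ℝ => x ^ 2 / h) (2 * x / h) x := by
    simpa using (hasDerivAt_pow 2 x).div_const h
  refine ⟨fun x _ => HasDerivAt.hasDerivWithinAt ?_, fun x _ => HasDerivAt.hasDerivWithinAt ?_,
    fun x hx => ?_⟩
  · exact ((hg _).comp x (hsq x)).congr_deriv (mul_comm _ _)
  · refine ((((hasDerivAt_id x).const_mul 2).div_const h).mul
      ((hg₁ _).comp x (hsq x))).congr_deriv ?_
    simp only [Function.comp, id]
    ring
  · have hx0 : x ≠ 0 := hx.1.ne'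
    rw [mul_assoc, ← heq]
    field_simp
    ring

end IsRadialSolution

lemma deriv_deriv_rpow_mul {w w₁ : ℝ → ℝ} {w₂ p x : ℝ} (hx : 0 < x)
    (hw : ∀ᶠ y in 𝓝 x, HasDerivAt w (w₁ y) y) (hw₁ : HasDerivAt w₁ w₂ x) :
    deriv (deriv fun y => y ^ p * w y) x =
      x ^ p * (w₂ + 2 * p / x * w₁ x + p * (p - 1) / x ^ 2 * w x) := by
  have hderiv : deriv (fun y => y ^ p * w y) =ᶠ[𝓝 x]
      fun y => p * y ^ (p - 1) * w y + y ^ p * w₁ y := by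
    filter_upwards [hw, lt_mem_nhds hx] with y hy hy0
    exact ((Real.hasDerivAt_rpow_const (Or.inl hy0.ne')).mul hy).deriv
  have hderiv₂ := (((Real.hasDerivAt_rpow_const (p := p - 1) (Or.inl hx.ne')).const_mul p).mul
    hw.self_of_nhds).add ((Real.hasDerivAt_rpow_const (p := p) (Or.inl hx.ne')).mul hw₁)
  rw [hderiv.deriv_eq]
  refine hderiv₂.deriv.trans ?_
  rw [Real.rpow_sub_one hx.ne', Real.rpow_sub_one hx.ne']
  field_simp
  ring

section Eigenfunctions

variable {W w w₁ : ℝ → ℝ} {ν L h lam w₂ x : ℝ}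

/-- Conjugation by `x ^ (1 / 2 + ν)` turns the inverse-square potential into a first-order term. -/
lemma schrodinger_rpow_mul_iff (hx : 0 < x) (hh : h ≠ 0)
    (hw : ∀ᶠ y in 𝓝 x, HasDerivAt w (w₁ y) y) (hw₁ : HasDerivAt w₁ w₂ x) :
    -(h ^ 2) * deriv (deriv (fun y : ℝ => y ^ ((1 : ℝ) / 2 + ν) * w y)) x
      + h ^ 2 * (ν ^ 2 - 1 / 4) * (x ^ 2)⁻¹ * (x ^ ((1 : ℝ) / 2 + ν) * w x)
      + W x * (x ^ ((1 : ℝ) / 2 + ν) * w x) = lam * (x ^ ((1 : ℝ) / 2 + ν) * w x) ↔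
    w₂ + (1 + 2 * ν) / x * w₁ x = (W x - lam) / h ^ 2 * w x := by
  rw [deriv_deriv_rpow_mul hx hw hw₁]
  have hpow : x ^ ((1 : ℝ) / 2 + ν) ≠ 0 := (Real.rpow_pos_of_pos hx _).ne'
  rw [div_mul_eq_mul_div (W x - lam), eq_div_iff (pow_ne_zero 2 hh)]
  refine ⟨fun H => mul_left_cancel₀ hpow ?_, fun H => ?_⟩
  · linear_combination -H
  · linear_combination -x ^ ((1 : ℝ) / 2 + ν) * H

lemma IsEigenfunctionQD.isRadialSolution (hL : 0 < L) (hh : h ≠ 0)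
    (hW : ContinuousOn W (Ioc 0 L)) (H : IsEigenfunctionQD W ν L h lam w) :
    IsRadialSolution (1 + 2 * ν) L (fun x => (W x - lam) / h ^ 2) w (derivWithin w (Icc 0 L))
      (derivWithin (derivWithin w (Icc 0 L)) (Icc 0 L)) := by
  obtain ⟨hw, -, -, heq⟩ := H
  have huniq : UniqueDiffOn ℝ (Icc 0 L) := uniqueDiffOn_Icc hL
  have hw₁ : ContDiffOn ℝ 1 (derivWithin w (Icc 0 L)) (Icc 0 L) :=
    hw.derivWithin huniq (by norm_num)
  have hd : ∀ x ∈ Icc 0 L, HasDerivWithinAt w (derivWithin w (Icc 0 L) x) (Icc 0 L) x :=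
    fun x hx => (hw.differentiableOn (by norm_num) x hx).hasDerivWithinAt
  have hd₁ : ∀ x ∈ Icc 0 L, HasDerivWithinAt (derivWithin w (Icc 0 L))
      (derivWithin (derivWithin w (Icc 0 L)) (Icc 0 L) x) (Icc 0 L) x :=
    fun x hx => (hw₁.differentiableOn (by norm_num) x hx).hasDerivWithinAt
  have hd₂ : ContinuousOn (derivWithin (derivWithin w (Icc 0 L)) (Icc 0 L)) (Icc 0 L) :=
    hw₁.continuousOn_derivWithin huniq le_rfl
  refine ⟨hd, hd₁, ?_⟩
  have hsub : Ioc 0 L ⊆ Icc 0 L := Ioc_subset_Icc_self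
  refine EqOn.of_subset_closure (s := Ioo 0 L) (fun x hx => ?_) ?_ ?_ Ioo_subset_Ioc_self
    (by rw [closure_Ioo hL.ne]; exact hsub)
  · refine (schrodinger_rpow_mul_iff hx.1 hh ?_ ?_).1 (heq x hx)
    · filter_upwards [isOpen_Ioo.mem_nhds hx] with y hy
      exact (hd y (Ioo_subset_Icc_self hy)).hasDerivAt (Icc_mem_nhds hy.1 hy.2)
    · exact (hd₁ x (Ioo_subset_Icc_self hx)).hasDerivAt (Icc_mem_nhds hx.1 hx.2)
  · exact (hd₂.mono hsub).add ((continuousOn_const.div continuousOn_id fun x hx => hx.1.ne').mul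
      (hw₁.continuousOn.mono hsub))
  · exact ((hW.sub continuousOn_const).div_const _).mul (hw.continuousOn.mono hsub)

lemma isEigQD_iff_eq_zero_right {v v₁ v₂ : ℝ → ℝ} (hν : -(1 / 2) < ν) (hL : 0 < L) (hh : h ≠ 0)
    (hW : ContinuousOn W (Ioc 0 L)) (hv : ContDiffOn ℝ 2 v (Icc 0 L))
    (hsol : IsRadialSolution (1 + 2 * ν) L (fun x => (W x - lam) / h ^ 2) v v₁ v₂)
    (hv0 : v 0 ≠ 0) : IsEigQD W ν L h lam ↔ v L = 0 := by
  constructor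
  · rintro ⟨w, hw⟩
    have hwsol := hw.isRadialSolution hL hh hW
    obtain ⟨-, ⟨x, hx, hne⟩, hwL, -⟩ := hw
    have hwL : w L = 0 := (mul_eq_zero.1 hwL).resolve_left (Real.rpow_pos_of_pos hL _).ne'
    have hwronsk := hwsol.wronskian_right_eq_zero (by linarith) hL hsol
    rw [hwL, zero_mul, zero_sub, neg_eq_zero] at hwronsk
    refine (mul_eq_zero.1 hwronsk).resolve_left fun hw₁L => hne ?_
    rw [hwsol.eq_zero_of_eq_zero_right ((hW.sub continuousOn_const).div_const _) hwL hw₁L hx,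
      mul_zero]
  · intro hvL
    refine ⟨v, hv, ?_, by rw [hvL, mul_zero], fun x hx => ?_⟩
    · have hcont : ContinuousWithinAt v (Ioc 0 L) 0 :=
        (hv.continuousOn 0 (left_mem_Icc.2 hL.le)).mono Ioc_subset_Icc_self
      have hne : ∀ᶠ x in 𝓝[Ioc 0 L] 0, v x ≠ 0 := hcont.eventually_ne hv0
      rw [nhdsWithin_Ioc_eq_nhdsGT hL] at hne
      obtain ⟨x, hvx, hx⟩ := (hne.and (Ioc_mem_nhdsGT hL)).exists
      exact ⟨x, hx, mul_ne_zero (Real.rpow_pos_of_pos hx.1 _).ne' hvx⟩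
    · refine (schrodinger_rpow_mul_iff hx.1 hh ?_ (hsol.hasDerivAt₁ hx)).2
        (hsol.equation x (Ioo_subset_Ioc_self hx))
      filter_upwards [isOpen_Ioo.mem_nhds hx] with y hy using hsol.hasDerivAt hy

end Eigenfunctions

lemma isRadialSolution_exp_mul_kummerM (a : ℝ) {b h : ℝ} (hb : 0 < b) (hh : h ≠ 0) (L : ℝ) :
    ∃ w₁ w₂, IsRadialSolution (2 * b - 1) L
      (fun x => 4 / h * ((x ^ 2 / h) / 4 - b / 2 + a))
      (fun x => Real.exp (-(x ^ 2 / h) / 2) * kummerM a b (x ^ 2 / h)) w₁ w₂ := by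
  have hE (z : ℝ) : HasDerivAt (fun z => Real.exp (-z / 2)) (Real.exp (-z / 2) * (-1 / 2)) z :=
    ((hasDerivAt_neg z).div_const 2).exp
  have hM₁ (z : ℝ) := (hasDerivAt_kummerM (a + 1) (b + 1) z).const_mul (a / b)
  refine ⟨_, _, .comp_sq_div hh (b := b) (q := fun z => z / 4 - b / 2 + a)
    (fun z => (hE z).mul (hasDerivAt_kummerM a b z))
    (fun z => (((hE z).mul_const (-1 / 2)).mul (hasDerivAt_kummerM a b z)).add
      ((hE z).mul (hM₁ z))) (fun z => ?_) L⟩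
  simp only [Pi.mul_apply]
  have hkummer := kummerM_contiguous a hb z
  field_simp at hkummer ⊢
  linear_combination 16 * a * hkummer

lemma isEigQD_sq_iff {ν L h lam : ℝ} (hν : -(1 / 2) < ν) (hL : 0 < L) (hh : 0 < h) :
    IsEigQD (fun x => x ^ 2) ν L h lam ↔
      kummerM ((1 + ν) / 2 - lam / (4 * h)) (1 + ν) (L ^ 2 / h) = 0 := by
  set a := (1 + ν) / 2 - lam / (4 * h) with ha
  obtain ⟨w₁, w₂, hsol⟩ := isRadialSolution_exp_mul_kummerM a
    (by linarith : 0 < 1 + ν) hh.ne' L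
  have hcoeff : (fun x : ℝ => 4 / h * ((x ^ 2 / h) / 4 - (1 + ν) / 2 + a)) =
      fun x => (x ^ 2 - lam) / h ^ 2 := by
    funext x
    rw [ha]
    field_simp
    ring
  rw [hcoeff, show 2 * (1 + ν) - 1 = 1 + 2 * ν by ring] at hsol
  have hsmooth : ContDiff ℝ 2
      (fun x => Real.exp (-(x ^ 2 / h) / 2) * kummerM a (1 + ν) (x ^ 2 / h)) := by
    have := contDiff_kummerM a (1 + ν) 2
    fun_prop
  rw [isEigQD_iff_eq_zero_right hν hL hh.ne' (by fun_prop) hsmooth.contDiffOn hsol (by simp)]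
  simp [Real.exp_ne_zero]

lemma setOf_isEigQD_sq {ν L h : ℝ} (hν : -(1 / 2) < ν) (hL : 0 < L) (hh : 0 < h) :
    {lam | IsEigQD (fun x => x ^ 2) ν L h lam} =
      (fun s => 4 * h * s + 2 * h * (1 + ν)) '' {s | kummerM (-s) (1 + ν) (L ^ 2 / h) = 0} := by
  ext lam
  simp only [mem_ofPred_eq, mem_image, isEigQD_sq_iff hν hL hh]
  constructor
  · intro H
    refine ⟨lam / (4 * h) - (1 + ν) / 2, by rwa [neg_sub], ?_⟩
    field_simp
    ring
  · rintro ⟨s, hs, rfl⟩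
    convert hs using 2
    field_simp
    ring

/-! ### Agreement to first order in `1 / z` -/

/-- The relation `f z = g z (1 + O(1 / z))` as `z → ∞`. -/
def AgreesToFirstOrder (f g : ℝ → ℝ) : Prop :=
  (fun z => f z - g z) =O[atTop] fun z => g z / z

namespace AgreesToFirstOrder

variable {f g f' g' : ℝ → ℝ}

lemma isEquivalent (h : AgreesToFirstOrder f g) : f ~[atTop] g := by
  refine h.trans_isLittleO ?_
  simpa only [div_eq_mul_inv, mul_one] using
    (isBigO_refl g atTop).mul_isLittleO ((isLittleO_one_iff ℝ).2 tendsto_inv_atTop_zero)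

lemma congr' (h : AgreesToFirstOrder f g) (hf : f =ᶠ[atTop] f') (hg : g =ᶠ[atTop] g') :
    AgreesToFirstOrder f' g' :=
  IsBigO.congr' h (hf.sub hg) (hg.div (EventuallyEq.refl _ _))

lemma trans {k : ℝ → ℝ} (hfg : AgreesToFirstOrder f g) (hgk : AgreesToFirstOrder g k) :
    AgreesToFirstOrder f k :=
  ((IsBigO.trans hfg (hgk.isEquivalent.isBigO.mul (isBigO_refl _ _))).add hgk).congr_left
    fun _ => sub_add_sub_cancel _ _ _

lemma symm (h : AgreesToFirstOrder f g) : AgreesToFirstOrder g f :=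
  (IsBigO.trans h (h.isEquivalent.isBigO_symm.mul (isBigO_refl _ _))).neg_left.congr_left
    fun _ => neg_sub _ _

lemma mul_left (h : AgreesToFirstOrder f g) (c : ℝ → ℝ) :
    AgreesToFirstOrder (fun z => c z * f z) fun z => c z * g z :=
  ((isBigO_refl c atTop).mul h).congr (fun _ => mul_sub _ _ _) fun _ => (mul_div_assoc _ _ _).symm

lemma mul (h : AgreesToFirstOrder f g) (h' : AgreesToFirstOrder f' g') :
    AgreesToFirstOrder (fun z => f z * f' z) fun z => g z * g' z := by
  refine (h'.mul_left f).trans ?_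
  simpa only [mul_comm] using h.mul_left g'

lemma inv (h : AgreesToFirstOrder f g) (hg : ∀ᶠ z in atTop, g z ≠ 0) :
    AgreesToFirstOrder (fun z => (f z)⁻¹) fun z => (g z)⁻¹ := by
  have hf : ∀ᶠ z in atTop, f z ≠ 0 := by
    obtain ⟨u, hu, hfu⟩ := h.isEquivalent.exists_eq_mul
    filter_upwards [hg, hfu, hu.eventually_ne one_ne_zero] with z hgz hz huz
    rw [hz]
    exact mul_ne_zero huz hgz
  refine (IsBigO.mul h.symm (isBigO_refl (fun z => (f z)⁻¹ * (g z)⁻¹) atTop)).congr' ?_ ?_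
  · filter_upwards [hf, hg] with z hfz hgz
    field_simp
  · filter_upwards [hf, hg] with z hfz hgz
    field_simp

end AgreesToFirstOrder

/-! ### Growth of `M(1, 1 + ν, z)` -/

lemma rpow_mul_exp_neg_mul_kummerM_one {ν z : ℝ} (hν : 0 < ν) (hz : 0 ≤ z) :
    z ^ ν * Real.exp (-z) * kummerM 1 (1 + ν) z =
      ν * ∫ x in (0 : ℝ)..z, Real.exp (-x) * x ^ (ν - 1) := by
  have hM : Continuous (kummerM 1 (1 + ν)) := (contDiff_kummerM 1 (1 + ν) 0).continuous
  have hrpow : Continuous fun z : ℝ => z ^ ν := Real.continuous_rpow_const hν.le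
  rw [← intervalIntegral.integral_const_mul, intervalIntegral.integral_eq_sub_of_hasDerivAt_of_le
    (f := fun z => z ^ ν * Real.exp (-z) * kummerM 1 (1 + ν) z) hz (by fun_prop)]
  · simp [Real.zero_rpow hν.ne']
  · intro x hx
    have hx0 : x ≠ 0 := hx.1.ne'
    refine (((Real.hasDerivAt_rpow_const (Or.inl hx0)).mul (hasDerivAt_neg x).exp).mul
      (hasDerivAt_kummerM 1 (1 + ν) x)).congr_deriv ?_
    have hode := kummerM_one_left_contiguous (by linarith : 0 < 1 + ν) x
    simp only [Pi.mul_apply]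
    rw [Real.rpow_sub_one hx0]
    field_simp at hode ⊢
    linear_combination x ^ ν * hode
  · refine IntervalIntegrable.const_mul ?_ ν
    rw [intervalIntegrable_iff_integrableOn_Ioc_of_le hz]
    exact (Real.GammaIntegral_convergent hν).mono_set Ioc_subset_Ioi_self

lemma integral_Ioi_exp_neg_mul_rpow_le {ν z : ℝ} (hν : 0 < ν) (hz : 0 < z) :
    ∫ x in Ioi z, Real.exp (-x) * x ^ (ν - 1) ≤ Real.Gamma (ν + 1) / z := by
  have hgamma := Real.GammaIntegral_convergent hν
  have hgamma₁ := Real.GammaIntegral_convergent (s := ν + 1) (by linarith)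
  have hsub : Ioi z ⊆ Ioi 0 := Ioi_subset_Ioi hz.le
  calc ∫ x in Ioi z, Real.exp (-x) * x ^ (ν - 1)
      ≤ ∫ x in Ioi z, Real.exp (-x) * x ^ (ν + 1 - 1) / z := by
        refine setIntegral_mono_on (hgamma.mono_set hsub) ((hgamma₁.mono_set hsub).div_const z)
          measurableSet_Ioi fun x (hx : z < x) => ?_
        have hx0 : 0 < x := hz.trans hx
        rw [Real.rpow_sub_one hx0.ne', add_sub_cancel_right, ← mul_div_assoc]
        gcongr
    _ = (∫ x in Ioi z, Real.exp (-x) * x ^ (ν + 1 - 1)) / z := integral_div _ _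
    _ ≤ (∫ x in Ioi 0, Real.exp (-x) * x ^ (ν + 1 - 1)) / z := by
        refine div_le_div_of_nonneg_right (setIntegral_mono_set hgamma₁ ?_ hsub.eventuallyLE) hz.le
        filter_upwards [ae_restrict_mem measurableSet_Ioi] with x (hx : 0 < x)
        exact mul_nonneg (Real.exp_nonneg _) (Real.rpow_nonneg hx.le _)
    _ = Real.Gamma (ν + 1) / z := by rw [← Real.Gamma_eq_integral (by linarith)]

lemma agreesToFirstOrder_kummerM_one {ν : ℝ} (hν : 0 < ν) :
    AgreesToFirstOrder (kummerM 1 (1 + ν))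
      fun z => Real.Gamma (1 + ν) / (z ^ ν * Real.exp (-z)) := by
  refine IsBigO.of_bound ν ?_
  filter_upwards [eventually_gt_atTop 0] with z hz
  have hgamma := Real.GammaIntegral_convergent hν
  set tail := ∫ x in Ioi z, Real.exp (-x) * x ^ (ν - 1)
  have htail : 0 ≤ tail := setIntegral_nonneg measurableSet_Ioi fun x (hx : z < x) =>
    mul_nonneg (Real.exp_nonneg _) (Real.rpow_nonneg (hz.trans hx).le _)
  have hsplit : z ^ ν * Real.exp (-z) * kummerM 1 (1 + ν) z + ν * tail = Real.Gamma (1 + ν) := by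
    rw [rpow_mul_exp_neg_mul_kummerM_one hν hz.le, ← mul_add, intervalIntegral.integral_of_le hz.le,
      ← setIntegral_union (Ioc_disjoint_Ioi le_rfl) measurableSet_Ioi
        (hgamma.mono_set Ioc_subset_Ioi_self) (hgamma.mono_set (Ioi_subset_Ioi hz.le)),
      Ioc_union_Ioi_eq_Ioi hz.le, ← Real.Gamma_eq_integral hν, add_comm 1,
      Real.Gamma_add_one hν.ne']
  have hdiff : kummerM 1 (1 + ν) z - Real.Gamma (1 + ν) / (z ^ ν * Real.exp (-z)) =
      -(ν * tail / (z ^ ν * Real.exp (-z))) := by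
    rw [← hsplit]
    field_simp
    ring
  rw [hdiff, norm_neg, Real.norm_of_nonneg (by positivity), Real.norm_of_nonneg (by positivity)]
  calc ν * tail / (z ^ ν * Real.exp (-z))
      ≤ ν * (Real.Gamma (ν + 1) / z) / (z ^ ν * Real.exp (-z)) := by
        gcongr
        exact integral_Ioi_exp_neg_mul_rpow_le hν hz
    _ = ν * (Real.Gamma (1 + ν) / (z ^ ν * Real.exp (-z)) / z) := by
        rw [add_comm ν]
        ring

/-! ### Splitting Kummer's series near `a = -k` -/

/-- The part of degree at most `k` of the series of `M(-(k + e), b, z)`, normalized by `(-1)ᵏ`. -/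
noncomputable def kummerHead (k : ℕ) (b z e : ℝ) : ℝ :=
  (-1) ^ k * ∑ l ∈ Finset.range (k + 1), kummerCoeff (-(k + e)) b l * z ^ l

/-- The `j`-th term of `kummerTailSum`. -/
noncomputable def kummerTailTerm (k : ℕ) (b z e : ℝ) (j : ℕ) : ℝ :=
  poch(1 - e, j) / (poch(b, j + (k + 1)) * (j + (k + 1)).factorial) * z ^ (j + (k + 1))

/-- The part of degree above `k` of the series of `M(-(k + e), b, z)`, divided by the common factor
`(-(k + e))ₖ₊₁ = (-1)ᵏ⁺¹ e (1 + e)ₖ` of its coefficients. -/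
noncomputable def kummerTailSum (k : ℕ) (b z e : ℝ) : ℝ := ∑' j, kummerTailTerm k b z e j

/-- The part of degree above `k` of the series of `M(-(k + e), b, z)`, normalized by
`(-1)ᵏ⁺¹ e`. -/
noncomputable def kummerTail (k : ℕ) (b z e : ℝ) : ℝ := poch(1 + e, k) * kummerTailSum k b z e

lemma kummerM_neg_add (k : ℕ) (b z e : ℝ) :
    kummerM (-(k + e)) b z = (-1) ^ k * (kummerHead k b z e - e * kummerTail k b z e) := by
  have hcommon : poch(-(k + e), k + 1) = -((-1) ^ k * (e * poch(1 + e, k))) := by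
    rw [ascPochhammer_succ_eval, ascPochhammer_eval_neg_add]
    ring
  have hterm (j : ℕ) : kummerCoeff (-(k + e)) b (j + (k + 1)) * z ^ (j + (k + 1)) =
      -((-1) ^ k * (e * poch(1 + e, k))) * kummerTailTerm k b z e j := by
    rw [← hcommon, kummerCoeff, kummerTailTerm, add_comm j, ascPochhammer_eval_add (-(k + e)),
      show -((k : ℝ) + e) + (k + 1 : ℕ) = 1 - e by push_cast; ring]
    ring
  have hsign : ((-1 : ℝ)) ^ k * (-1) ^ k = 1 := by rw [← mul_pow]; norm_num
  rw [kummerM, ← (summable_kummerCoeff_mul_pow (-(k + e)) b z).sum_add_tsum_nat_add (k + 1),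
    tsum_congr hterm, tsum_mul_left, kummerHead, kummerTail, kummerTailSum]
  linear_combination
    (-∑ l ∈ Finset.range (k + 1), kummerCoeff (-(k + e)) b l * z ^ l) * hsign

/-! ### The head -/

lemma abs_sum_range_mul_pow_le {c C : ℕ → ℝ} {n : ℕ} {z : ℝ} (hc : ∀ l < n, |c l| ≤ C l)
    (hz : 1 ≤ z) :
    |∑ l ∈ Finset.range n, c l * z ^ l| ≤ (∑ l ∈ Finset.range n, C l) * (z ^ n / z) := by
  rw [Finset.sum_mul]
  refine (Finset.abs_sum_le_sum_abs _ _).trans (Finset.sum_le_sum fun l hl => ?_)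
  have hl : l < n := Finset.mem_range.1 hl
  have hC : 0 ≤ C l := (abs_nonneg _).trans (hc l hl)
  have hpow : z ^ l ≤ z ^ n / z := by
    rw [le_div_iff₀ (by positivity), ← pow_succ]
    exact pow_le_pow_right₀ hz hl
  rw [abs_mul, abs_of_nonneg (by positivity : 0 ≤ z ^ l)]
  gcongr
  exact hc l hl

section Head

variable {b : ℝ} (k : ℕ)

lemma abs_div_ascPochhammer_mul_factorial_le (hb : 1 ≤ b) (x : ℝ) (n : ℕ) :
    |x / (poch(b, n) * n.factorial)| ≤ |x| := by
  have hden : 1 ≤ poch(b, n) * n.factorial :=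
    one_le_mul_of_one_le_of_one_le (one_le_ascPochhammer_eval hb n)
      (mod_cast n.factorial_pos)
  rw [abs_div, abs_of_pos (zero_lt_one.trans_le hden)]
  exact div_le_self (abs_nonneg x) hden

lemma abs_neg_add_le {e : ℝ} (he : |e| ≤ 1 / 2) : |-(k + e)| ≤ k + 1 := by
  rw [abs_neg]
  refine (abs_add_le _ _).trans ?_
  rw [Nat.abs_cast]
  linarith

lemma abs_kummerHead_le (hb : 1 ≤ b) {z e : ℝ} (hz : 1 ≤ z) (he : |e| ≤ 1 / 2) :
    |kummerHead k b z e| ≤ (∑ l ∈ Finset.range (k + 1), poch((k + 1 : ℝ), l)) * z ^ k := by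
  rw [kummerHead, abs_mul, abs_neg_one_pow, one_mul]
  refine (abs_sum_range_mul_pow_le (C := fun l => poch((k + 1 : ℝ), l)) (fun l _ => ?_) hz).trans_eq
    ?_
  · exact (abs_div_ascPochhammer_mul_factorial_le hb _ l).trans
      (abs_ascPochhammer_eval_le (abs_neg_add_le k he) l)
  · rw [pow_succ, mul_div_cancel_right₀ _ (by positivity)]

lemma abs_kummerHead_sub_le (hb : 1 ≤ b) {z e f : ℝ} (hz : 1 ≤ z) (he : |e| ≤ 1 / 2)
    (hf : |f| ≤ 1 / 2) :
    |kummerHead k b z e - kummerHead k b z f| ≤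
      (∑ l ∈ Finset.range (k + 1), l * poch((k + 1 : ℝ), l)) * z ^ k * |e - f| := by
  rw [kummerHead, kummerHead, ← mul_sub, abs_mul, abs_neg_one_pow, one_mul,
    ← Finset.sum_sub_distrib]
  simp_rw [← sub_mul]
  refine (abs_sum_range_mul_pow_le (C := fun l => l * poch((k + 1 : ℝ), l) * |e - f|)
    (fun l _ => ?_) hz).trans_eq ?_
  · rw [kummerCoeff, kummerCoeff, ← sub_div]
    refine (abs_div_ascPochhammer_mul_factorial_le hb _ l).trans ?_
    refine (abs_ascPochhammer_eval_sub_le (by simp) (abs_neg_add_le k he) (abs_neg_add_le k hf)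
      l).trans_eq ?_
    rw [← abs_neg (e - f)]
    ring_nf
  · rw [← Finset.sum_mul, pow_succ, mul_div_cancel_right₀ _ (by positivity)]
    ring

lemma agreesToFirstOrder_kummerHead_zero (hb : 1 ≤ b) :
    AgreesToFirstOrder (fun z => kummerHead k b z 0) fun z => z ^ k / poch(b, k) := by
  have hpos : 0 < poch(b, k) := ascPochhammer_pos k b (by linarith)
  have hlead (z : ℝ) : (-1) ^ k * (kummerCoeff (-(k + 0)) b k * z ^ k) = z ^ k / poch(b, k) := by
    have hsign : ((-1 : ℝ)) ^ k * (-1) ^ k = 1 := by rw [← mul_pow]; norm_num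
    rw [kummerCoeff, ascPochhammer_eval_neg_add, add_zero, ascPochhammer_eval_one]
    field_simp
    linear_combination z ^ k * hsign
  refine IsBigO.of_bound ((∑ l ∈ Finset.range k, poch((k + 1 : ℝ), l)) * poch(b, k)) ?_
  filter_upwards [eventually_ge_atTop 1] with z hz
  rw [kummerHead, Finset.sum_range_succ, mul_add, hlead, add_sub_cancel_right, norm_mul, norm_pow,
    norm_neg, norm_one, one_pow, one_mul, Real.norm_eq_abs,
    Real.norm_of_nonneg (by positivity : 0 ≤ z ^ k / poch(b, k) / z)]
  refine (abs_sum_range_mul_pow_le (C := fun l => poch((k + 1 : ℝ), l)) (fun l _ => ?_) hz).trans_eq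
    ?_
  · exact (abs_div_ascPochhammer_mul_factorial_le hb _ l).trans
      (abs_ascPochhammer_eval_le (abs_neg_add_le k (by norm_num)) l)
  · field_simp

end Head

/-! ### The tail -/

lemma tsum_pow_div_factorial_nat_add_le {z : ℝ} (hz : 0 ≤ z) (k : ℕ) :
    ∑' j : ℕ, z ^ (j + k) / ((j + k).factorial : ℝ) ≤ Real.exp z := by
  rw [Real.exp_eq_exp_ℝ, NormedSpace.exp_eq_tsum_div]
  exact tsum_comp_le_tsum_of_inj (Real.summable_pow_div_factorial z) (fun n => by positivity)
    (add_left_injective k)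

section Tail

variable (k : ℕ) {b z e f : ℝ}

lemma kummerTailTerm_nonneg (hb : 1 ≤ b) (hz : 0 ≤ z) (he : |e| ≤ 1 / 2) (j : ℕ) :
    0 ≤ kummerTailTerm k b z e j := by
  have hden := ascPochhammer_pos (j + (k + 1)) b (by linarith)
  have hnum := ascPochhammer_pos j (1 - e) (by linarith [(abs_le.1 he).2])
  rw [kummerTailTerm]
  positivity

lemma kummerTailTerm_le (hb : 1 ≤ b) (hz : 0 ≤ z) (he : |e| ≤ 1 / 2) (j : ℕ) :
    kummerTailTerm k b z e j ≤ z ^ (j + (k + 1)) / ((j + (k + 1)).factorial : ℝ) := by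
  obtain ⟨he₁, he₂⟩ := abs_le.1 he
  have hnum : poch(1 - e, j) ≤ (j + (k + 1)).factorial := calc
    poch(1 - e, j) ≤ poch((2 : ℝ), j) :=
      ascPochhammer_eval_mono (by linarith) (by linarith) j
    _ = (j + 1).factorial := ascPochhammer_eval_two j
    _ ≤ (j + (k + 1)).factorial := mod_cast Nat.factorial_le (by omega)
  have hden := factorial_le_ascPochhammer_eval hb (j + (k + 1))
  rw [kummerTailTerm]
  calc poch(1 - e, j) / (poch(b, j + (k + 1)) * (j + (k + 1)).factorial) * z ^ (j + (k + 1))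
      ≤ (j + (k + 1)).factorial / ((j + (k + 1)).factorial * (j + (k + 1)).factorial) *
          z ^ (j + (k + 1)) := by gcongr
    _ = z ^ (j + (k + 1)) / ((j + (k + 1)).factorial : ℝ) := by field_simp

lemma summable_kummerTailTerm (hb : 1 ≤ b) (hz : 0 ≤ z) (he : |e| ≤ 1 / 2) :
    Summable (kummerTailTerm k b z e) :=
  .of_nonneg_of_le (kummerTailTerm_nonneg k hb hz he) (kummerTailTerm_le k hb hz he)
    ((summable_nat_add_iff (k + 1)).2 (Real.summable_pow_div_factorial z))

lemma kummerTailSum_nonneg (hb : 1 ≤ b) (hz : 0 ≤ z) (he : |e| ≤ 1 / 2) :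
    0 ≤ kummerTailSum k b z e :=
  tsum_nonneg (kummerTailTerm_nonneg k hb hz he)

lemma kummerTailSum_le_exp (hb : 1 ≤ b) (hz : 0 ≤ z) (he : |e| ≤ 1 / 2) :
    kummerTailSum k b z e ≤ Real.exp z :=
  ((summable_kummerTailTerm k hb hz he).tsum_le_tsum (kummerTailTerm_le k hb hz he)
    ((summable_nat_add_iff (k + 1)).2 (Real.summable_pow_div_factorial z))).trans
    (tsum_pow_div_factorial_nat_add_le hz (k + 1))

lemma abs_kummerTailTerm_sub_le (hb : 1 ≤ b) (hz : 0 ≤ z) (he : |e| ≤ 1 / 2)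
    (hf : |f| ≤ 1 / 2) (j : ℕ) :
    |kummerTailTerm k b z e j - kummerTailTerm k b z f j| ≤
      z * |e - f| * (z ^ (j + k) / ((j + k).factorial : ℝ)) := by
  have habs {x : ℝ} (hx : |x| ≤ 1 / 2) : |1 - x| ≤ 2 :=
    (abs_sub _ _).trans (by rw [abs_one]; linarith)
  have hnum : |poch(1 - e, j) - poch(1 - f, j)| ≤
      ((j + k : ℕ) + 1) * (j + (k + 1)).factorial * |e - f| := calc
    |poch(1 - e, j) - poch(1 - f, j)| ≤ j * poch((2 : ℝ), j) * |1 - e - (1 - f)| :=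
      abs_ascPochhammer_eval_sub_le one_le_two (habs he) (habs hf) j
    _ = j * (j + 1).factorial * |e - f| := by
      rw [ascPochhammer_eval_two, sub_sub_sub_cancel_left, abs_sub_comm]
    _ ≤ ((j + k : ℕ) + 1) * (j + (k + 1)).factorial * |e - f| := by
      gcongr
      · push_cast
        linarith [k.cast_nonneg (α := ℝ)]
      · omega
  have hden := factorial_le_ascPochhammer_eval hb (j + (k + 1))
  have hden0 := ascPochhammer_pos (j + (k + 1)) b (by linarith)
  rw [kummerTailTerm, kummerTailTerm, ← sub_mul, ← sub_div, abs_mul, abs_div,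
    abs_of_pos (mul_pos hden0 (by positivity)), abs_of_nonneg (pow_nonneg hz _)]
  calc |poch(1 - e, j) - poch(1 - f, j)| / (poch(b, j + (k + 1)) * (j + (k + 1)).factorial) *
        z ^ (j + (k + 1))
      ≤ ((j + k : ℕ) + 1) * (j + (k + 1)).factorial * |e - f| /
          ((j + (k + 1)).factorial * (j + (k + 1)).factorial) * z ^ (j + (k + 1)) := by gcongr
    _ = z * |e - f| * (z ^ (j + k) / ((j + k).factorial : ℝ)) := by
        rw [← add_assoc, Nat.factorial_succ, pow_succ]
        push_cast
        field_simp

lemma abs_kummerTailSum_sub_le (hb : 1 ≤ b) (hz : 0 ≤ z) (he : |e| ≤ 1 / 2)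
    (hf : |f| ≤ 1 / 2) :
    |kummerTailSum k b z e - kummerTailSum k b z f| ≤ z * Real.exp z * |e - f| := by
  have hsum := ((summable_nat_add_iff k).2 (Real.summable_pow_div_factorial z)).mul_left
    (z * |e - f|)
  rw [kummerTailSum, kummerTailSum, ← (summable_kummerTailTerm k hb hz he).tsum_sub
    (summable_kummerTailTerm k hb hz hf)]
  calc |∑' j, (kummerTailTerm k b z e j - kummerTailTerm k b z f j)|
      ≤ ∑' j, z * |e - f| * (z ^ (j + k) / ((j + k).factorial : ℝ)) :=
        tsum_of_norm_bounded (f := fun j => kummerTailTerm k b z e j - kummerTailTerm k b z f j)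
          hsum.hasSum (abs_kummerTailTerm_sub_le k hb hz he hf)
    _ ≤ z * |e - f| * Real.exp z := by
        rw [tsum_mul_left]
        gcongr
        exact tsum_pow_div_factorial_nat_add_le hz k
    _ = z * Real.exp z * |e - f| := by ring

end Tail

/-! ### Comparison of the tail with `M(1, b, z)` -/

/-- The `n`-th term of the series of `M(1, b, z)`. -/
noncomputable def kummerOneTerm (b z : ℝ) (n : ℕ) : ℝ := z ^ n / poch(b, n)

section KummerOneTerm

variable {b z : ℝ}

lemma hasSum_kummerOneTerm (b z : ℝ) : HasSum (kummerOneTerm b z) (kummerM 1 b z) := by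
  refine (hasSum_kummerM 1 b z).congr_fun fun n => ?_
  rw [kummerOneTerm, kummerCoeff_one_left, inv_mul_eq_div]

lemma kummerOneTerm_nonneg (hb : 0 < b) (hz : 0 ≤ z) (n : ℕ) : 0 ≤ kummerOneTerm b z n :=
  div_nonneg (pow_nonneg hz n) (ascPochhammer_pos n b hb).le

lemma kummerOneTerm_succ_mul (hb : 0 < b) (z : ℝ) (n : ℕ) :
    kummerOneTerm b z (n + 1) * (b + n) = z * kummerOneTerm b z n := by
  have hpoch := ascPochhammer_pos n b hb
  rw [kummerOneTerm, kummerOneTerm, ascPochhammer_succ_eval, pow_succ]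
  field_simp

lemma tsum_kummerOneTerm_nat_add_le (hb : 0 < b) (hz : 0 ≤ z) (n : ℕ) :
    ∑' j, kummerOneTerm b z (j + n) ≤ kummerM 1 b z := by
  rw [← (hasSum_kummerOneTerm b z).tsum_eq]
  exact tsum_comp_le_tsum_of_inj (hasSum_kummerOneTerm b z).summable (kummerOneTerm_nonneg hb hz)
    (add_left_injective n)

lemma sum_range_kummerOneTerm_le (hb : 1 ≤ b) (hz : 1 ≤ z) (n : ℕ) :
    ∑ i ∈ Finset.range n, kummerOneTerm b z i ≤ n * poch(b, n) * (kummerM 1 b z / z) := by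
  have hpoch := ascPochhammer_pos n b (by linarith)
  have hterm : kummerOneTerm b z n ≤ kummerM 1 b z :=
    le_hasSum (hasSum_kummerOneTerm b z) n fun i _ =>
      kummerOneTerm_nonneg (by linarith) (by linarith) i
  have hcoeff (i : ℕ) : |(poch(b, i))⁻¹| ≤ 1 := by
    have hpoch := one_le_ascPochhammer_eval hb i
    rw [abs_of_nonneg (by positivity)]
    exact inv_le_one_of_one_le₀ hpoch
  calc ∑ i ∈ Finset.range n, kummerOneTerm b z i
      = ∑ i ∈ Finset.range n, (poch(b, i))⁻¹ * z ^ i := by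
        simp only [kummerOneTerm, inv_mul_eq_div]
    _ ≤ (∑ _i ∈ Finset.range n, 1) * (z ^ n / z) :=
        (le_abs_self _).trans (abs_sum_range_mul_pow_le (fun i _ => hcoeff i) hz)
    _ = n * poch(b, n) * (kummerOneTerm b z n / z) := by
        rw [Finset.sum_const, Finset.card_range, nsmul_one, kummerOneTerm]
        field_simp
    _ ≤ n * poch(b, n) * (kummerM 1 b z / z) := by gcongr

lemma sub_le_tsum_kummerOneTerm_nat_add (hb : 1 ≤ b) (hz : 1 ≤ z) (n : ℕ) :
    kummerM 1 b z - n * poch(b, n) * (kummerM 1 b z / z) ≤ ∑' j, kummerOneTerm b z (j + n) := by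
  have hsum := hasSum_kummerOneTerm b z
  have hsplit := hsum.summable.sum_add_tsum_nat_add n
  rw [hsum.tsum_eq] at hsplit
  linarith [sum_range_kummerOneTerm_le hb hz n]

end KummerOneTerm

section TailComparison

variable (k : ℕ) {b z e : ℝ}

lemma kummerTailTerm_zero_mul_pow_mul (hb : 0 < b) (z : ℝ) (j : ℕ) :
    kummerTailTerm k b z 0 j * z ^ (k + 1) * poch((1 + j : ℝ), k + 1) =
      kummerOneTerm b z (j + (2 * k + 2)) * poch(b + (j + (k + 1) : ℕ), k + 1) := by
  have hfactorial : ((j + (k + 1)).factorial : ℝ) = j.factorial * poch((1 + j : ℝ), k + 1) := by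
    rw [← ascPochhammer_eval_one ℝ, ascPochhammer_eval_add, ascPochhammer_eval_one]
  have h₁ := ascPochhammer_pos (k + 1) (1 + j : ℝ) (by positivity)
  have h₂ := ascPochhammer_pos (j + (k + 1)) b hb
  have h₃ := ascPochhammer_pos (k + 1) (b + (j + (k + 1) : ℕ)) (by positivity)
  rw [kummerTailTerm, kummerOneTerm, show j + (2 * k + 2) = j + (k + 1) + (k + 1) by ring,
    ascPochhammer_eval_add b (j + (k + 1)), sub_zero, ascPochhammer_eval_one, hfactorial,
    pow_add z (j + (k + 1))]
  field_simp

lemma kummerOneTerm_le_kummerTailTerm_zero (hb : 1 ≤ b) (hz : 0 ≤ z) (j : ℕ) :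
    kummerOneTerm b z (j + (2 * k + 2)) ≤ kummerTailTerm k b z 0 j * z ^ (k + 1) := by
  have hb0 : 0 < b := by linarith
  refine le_of_mul_le_mul_right ?_ (ascPochhammer_pos (k + 1) (1 + j : ℝ) (by positivity))
  rw [kummerTailTerm_zero_mul_pow_mul k hb0]
  refine mul_le_mul_of_nonneg_left (ascPochhammer_eval_mono (by positivity) ?_ _)
    (kummerOneTerm_nonneg hb0 hz _)
  push_cast
  linarith [k.cast_nonneg (α := ℝ)]

lemma exists_kummerTailTerm_zero_le (hb : 1 ≤ b) :
    ∃ C, 0 ≤ C ∧ ∀ z, 0 < z → ∀ j, kummerTailTerm k b z 0 j * z ^ (k + 1) ≤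
      kummerOneTerm b z (j + (2 * k + 2)) + C / z * kummerOneTerm b z (j + (2 * k + 3)) := by
  obtain ⟨C, hC, hratio⟩ := exists_ascPochhammer_eval_add_le (by positivity : 0 ≤ b + k) (k + 1)
  refine ⟨C * (b + 2 * k + 2), by positivity, fun z hz j => ?_⟩
  have hb0 : 0 < b := by linarith
  have hn := kummerOneTerm_nonneg hb0 hz.le (j + (2 * k + 2))
  have hn' := kummerOneTerm_nonneg hb0 hz.le (j + (2 * k + 3))
  have hterm : kummerTailTerm k b z 0 j * z ^ (k + 1) ≤
      kummerOneTerm b z (j + (2 * k + 2)) * (1 + C / (1 + j)) := by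
    refine le_of_mul_le_mul_right ?_ (ascPochhammer_pos (k + 1) (1 + j : ℝ) (by positivity))
    rw [kummerTailTerm_zero_mul_pow_mul k hb0, mul_assoc, mul_comm (1 + C / (1 + j : ℝ)),
      show b + (j + (k + 1) : ℕ) = 1 + j + (b + k) by push_cast; ring]
    gcongr
    exact hratio (1 + j) (by simp)
  have hsucc : kummerOneTerm b z (j + (2 * k + 2)) =
      kummerOneTerm b z (j + (2 * k + 3)) * (b + (j + (2 * k + 2) : ℕ)) / z := by
    rw [← add_assoc j (2 * k + 2) 1, kummerOneTerm_succ_mul hb0, mul_div_cancel_left₀ _ hz.ne']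
  have hfrac : (b + (j + (2 * k + 2) : ℕ)) / (1 + j) ≤ b + 2 * k + 2 := by
    rw [div_le_iff₀ (by positivity)]
    push_cast
    nlinarith [mul_nonneg j.cast_nonneg hb0.le, mul_nonneg (α := ℝ) j.cast_nonneg k.cast_nonneg]
  calc kummerTailTerm k b z 0 j * z ^ (k + 1)
      ≤ kummerOneTerm b z (j + (2 * k + 2)) * (1 + C / (1 + j)) := hterm
    _ = kummerOneTerm b z (j + (2 * k + 2)) + C * ((b + (j + (2 * k + 2) : ℕ)) / (1 + j)) / z *
          kummerOneTerm b z (j + (2 * k + 3)) := by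
        rw [mul_one_add]
        nth_rw 2 [hsucc]
        ring
    _ ≤ kummerOneTerm b z (j + (2 * k + 2)) + C * (b + 2 * k + 2) / z *
          kummerOneTerm b z (j + (2 * k + 3)) := by gcongr

lemma tsum_kummerOneTerm_le_kummerTailSum_zero (hb : 1 ≤ b) (hz : 0 ≤ z) :
    ∑' j, kummerOneTerm b z (j + (2 * k + 2)) ≤ kummerTailSum k b z 0 * z ^ (k + 1) := by
  rw [kummerTailSum, ← tsum_mul_right]
  exact ((summable_nat_add_iff _).2 (hasSum_kummerOneTerm b z).summable).tsum_le_tsum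
    (kummerOneTerm_le_kummerTailTerm_zero k hb hz)
    ((summable_kummerTailTerm k hb hz (by norm_num)).mul_right _)

lemma exists_kummerTailSum_zero_le (hb : 1 ≤ b) :
    ∃ C, ∀ z, 0 < z →
      kummerTailSum k b z 0 * z ^ (k + 1) ≤ kummerM 1 b z + C * (kummerM 1 b z / z) := by
  obtain ⟨C, hC, hterm⟩ := exists_kummerTailTerm_zero_le k hb
  refine ⟨C, fun z hz => ?_⟩
  have hsummable (n : ℕ) : Summable fun j => kummerOneTerm b z (j + n) :=
    (summable_nat_add_iff n).2 (hasSum_kummerOneTerm b z).summable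
  have hle := tsum_kummerOneTerm_nat_add_le (by linarith : 0 < b) hz.le
  calc kummerTailSum k b z 0 * z ^ (k + 1)
      = ∑' j, kummerTailTerm k b z 0 j * z ^ (k + 1) := by rw [kummerTailSum, tsum_mul_right]
    _ ≤ ∑' j, (kummerOneTerm b z (j + (2 * k + 2)) +
          C / z * kummerOneTerm b z (j + (2 * k + 3))) :=
        ((summable_kummerTailTerm k hb hz.le (by norm_num)).mul_right _).tsum_le_tsum (hterm z hz)
          ((hsummable _).add ((hsummable _).mul_left _))
    _ = ∑' j, kummerOneTerm b z (j + (2 * k + 2)) +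
          C / z * ∑' j, kummerOneTerm b z (j + (2 * k + 3)) := by
        rw [(hsummable _).tsum_add ((hsummable _).mul_left _), tsum_mul_left]
    _ ≤ kummerM 1 b z + C / z * kummerM 1 b z := by gcongr <;> exact hle _
    _ = kummerM 1 b z + C * (kummerM 1 b z / z) := by ring

lemma agreesToFirstOrder_kummerTailSum_zero (hb : 1 ≤ b) :
    AgreesToFirstOrder (fun z => kummerTailSum k b z 0 * z ^ (k + 1)) (kummerM 1 b) := by
  obtain ⟨C, hle⟩ := exists_kummerTailSum_zero_le k hb
  refine IsBigO.of_bound (max C ((2 * k + 2 : ℕ) * poch(b, 2 * k + 2))) ?_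
  filter_upwards [eventually_ge_atTop 1] with z hz
  have hM : 0 ≤ kummerM 1 b z / z := by
    have := one_le_kummerM zero_le_one (by linarith : 0 < b) (by linarith : 0 ≤ z)
    positivity
  have hge := (sub_le_tsum_kummerOneTerm_nat_add hb hz (2 * k + 2)).trans
    (tsum_kummerOneTerm_le_kummerTailSum_zero k hb (by linarith))
  rw [Real.norm_of_nonneg hM, Real.norm_eq_abs, abs_le]
  constructor
  · linarith [mul_le_mul_of_nonneg_right (le_max_right C ((2 * k + 2 : ℕ) * poch(b, 2 * k + 2))) hM]
  · linarith [mul_le_mul_of_nonneg_right (le_max_left C ((2 * k + 2 : ℕ) * poch(b, 2 * k + 2))) hM,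
      hle z (by linarith)]

lemma kummerTailTerm_zero_div_le (hb : 1 ≤ b) (hz : 0 ≤ z) (he : |e| ≤ 1 / 2) (j : ℕ) :
    kummerTailTerm k b z 0 j / (2 * (j + 1)) ≤ kummerTailTerm k b z e j := by
  have hden := ascPochhammer_pos (j + (k + 1)) b (by linarith)
  have hnum : (j.factorial : ℝ) / (2 * (j + 1)) ≤ poch(1 - e, j) :=
    (factorial_div_le_ascPochhammer_eval_half j).trans
      (ascPochhammer_eval_mono (by norm_num) (by linarith [(abs_le.1 he).2]) j)
  rw [kummerTailTerm, kummerTailTerm, sub_zero, ascPochhammer_eval_one, mul_div_right_comm,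
    div_right_comm]
  gcongr

lemma kummerOneTerm_half_le_kummerTailTerm (hb : 1 ≤ b) (hz : 0 ≤ z) (he : |e| ≤ 1 / 2)
    (j : ℕ) :
    1 / 2 * kummerOneTerm b z (j + (2 * k + 3)) ≤ kummerTailTerm k b z e j * z ^ (k + 2) := by
  have hb0 : 0 < b := by linarith
  have hsucc := kummerOneTerm_succ_mul hb0 z (j + (2 * k + 2))
  have hn := kummerOneTerm_nonneg hb0 hz (j + (2 * k + 3))
  calc 1 / 2 * kummerOneTerm b z (j + (2 * k + 3))
      = kummerOneTerm b z (j + (2 * k + 3)) * (j + 1) / (2 * (j + 1)) := by field_simp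
    _ ≤ kummerOneTerm b z (j + (2 * k + 3)) * (b + (j + (2 * k + 2) : ℕ)) / (2 * (j + 1)) := by
        gcongr ?_ / _
        refine mul_le_mul_of_nonneg_left ?_ hn
        push_cast
        linarith [k.cast_nonneg (α := ℝ)]
    _ = z * kummerOneTerm b z (j + (2 * k + 2)) / (2 * (j + 1)) := by rw [← hsucc]; rfl
    _ ≤ z * (kummerTailTerm k b z 0 j * z ^ (k + 1)) / (2 * (j + 1)) := by
        gcongr
        exact kummerOneTerm_le_kummerTailTerm_zero k hb hz j
    _ = kummerTailTerm k b z 0 j / (2 * (j + 1)) * z ^ (k + 2) := by ring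
    _ ≤ kummerTailTerm k b z e j * z ^ (k + 2) := by
        gcongr
        exact kummerTailTerm_zero_div_le k hb hz he j

lemma eventually_kummerM_one_div_four_le (hb : 1 ≤ b) :
    ∀ᶠ z in atTop, ∀ e, |e| ≤ 1 / 2 →
      kummerM 1 b z / 4 ≤ kummerTailSum k b z e * z ^ (k + 2) := by
  filter_upwards [eventually_ge_atTop 1,
    eventually_ge_atTop (2 * ((2 * k + 3 : ℕ) * poch(b, 2 * k + 3)))] with z hz hz' e he
  have hz0 : 0 < z := by linarith
  have hM := one_le_kummerM zero_le_one (by linarith : 0 < b) hz0.le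
  have hsmall : (2 * k + 3 : ℕ) * poch(b, 2 * k + 3) * (kummerM 1 b z / z) ≤
      kummerM 1 b z / 2 := by
    rw [← mul_div_assoc, div_le_iff₀ hz0]
    nlinarith
  calc kummerM 1 b z / 4
      ≤ 1 / 2 * ∑' j, kummerOneTerm b z (j + (2 * k + 3)) := by
        linarith [sub_le_tsum_kummerOneTerm_nat_add hb hz (2 * k + 3)]
    _ = ∑' j, 1 / 2 * kummerOneTerm b z (j + (2 * k + 3)) := tsum_mul_left.symm
    _ ≤ ∑' j, kummerTailTerm k b z e j * z ^ (k + 2) :=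
        (((summable_nat_add_iff _).2 (hasSum_kummerOneTerm b z).summable).mul_left _).tsum_le_tsum
          (kummerOneTerm_half_le_kummerTailTerm k hb hz0.le he)
          ((summable_kummerTailTerm k hb hz0.le he).mul_right _)
    _ = kummerTailSum k b z e * z ^ (k + 2) := tsum_mul_right

end TailComparison

/-! ### Zeros of `s ↦ M(-s, 1 + ν, z)` near `s = k` -/

lemma abs_div_sub_div_le {x x' y y' β : ℝ} (hβ : 0 < β) (hy : β ≤ y) (hy' : β ≤ y') :
    |x / y - x' / y'| ≤ |x - x'| / β + |x'| * |y - y'| / β ^ 2 := by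
  have hy0 : 0 < y := hβ.trans_le hy
  have hy0' : 0 < y' := hβ.trans_le hy'
  have hsplit : x / y - x' / y' = (x - x') / y - x' * (y - y') / (y * y') := by
    field_simp
    ring
  rw [hsplit, sq]
  refine (abs_sub _ _).trans ?_
  rw [abs_div, abs_div, abs_mul, abs_of_pos hy0, abs_of_pos (mul_pos hy0 hy0')]
  gcongr

lemma exists_unique_fixedPt_of_lipschitz {φ : ℝ → ℝ} {r κ : ℝ} (hr : 0 ≤ r) (hκ0 : 0 ≤ κ)
    (hκ : κ < 1) (hmaps : ∀ e, |e| ≤ r → |φ e| ≤ r)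
    (hlip : ∀ e f, |e| ≤ r → |f| ≤ r → |φ e - φ f| ≤ κ * |e - f|) :
    ∃ e, |e| ≤ r ∧ φ e = e ∧ ∀ f, |f| ≤ r → φ f = f → f = e := by
  have hcont : ContinuousOn φ (Icc (-r) r) :=
    (LipschitzOnWith.of_dist_le_mul (K := ⟨κ, hκ0⟩) fun e he f hf =>
      hlip e f (abs_le.2 he) (abs_le.2 hf)).continuousOn
  obtain ⟨e, he, hfix⟩ := exists_mem_Icc_isFixedPt_of_mapsTo hcont (by linarith)
    fun e he => abs_le.1 (hmaps e (abs_le.2 he))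
  refine ⟨e, abs_le.2 he, hfix, fun f hf hffix => ?_⟩
  have hdist := hlip f e hf (abs_le.2 he)
  rw [hffix, hfix] at hdist
  exact sub_eq_zero.1 (abs_eq_zero.1 (by nlinarith [abs_nonneg (f - e)]))

lemma eventually_mul_rpow_mul_exp_neg_le_inv (C p : ℝ) :
    ∀ᶠ z in atTop, C * (z ^ p * Real.exp (-z)) ≤ z⁻¹ := by
  have hlim := (tendsto_rpow_mul_exp_neg_mul_atTop_nhds_zero (p + 1) 1 one_pos).const_mul C
  rw [mul_zero] at hlim
  filter_upwards [hlim.eventually_le_const one_pos, eventually_gt_atTop 0] with z hle hz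
  rw [Real.rpow_add_one hz.ne', neg_one_mul] at hle
  rw [← one_div, le_div_iff₀ hz]
  linarith

/-- Head over tail: where the tail does not vanish, `M(-(k + e), b, z) = 0` exactly when `e` is a
fixed point. -/
noncomputable def kummerRatio (k : ℕ) (b z e : ℝ) : ℝ := kummerHead k b z e / kummerTail k b z e

/-- The leading term of `s - k`, where `s` is the zero of `s ↦ M(-s, 1 + ν, z)` near `k`. -/
noncomputable def kummerZeroShift (k : ℕ) (ν z : ℝ) : ℝ :=
  z ^ (2 * k + 1) * z ^ ν * Real.exp (-z) / (k.factorial * Real.Gamma (1 + k + ν))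

section Zeros

variable (k : ℕ) {b ν z e f : ℝ}

lemma kummerM_neg_add_eq_zero_iff (htail : kummerTail k b z e ≠ 0) :
    kummerM (-(k + e)) b z = 0 ↔ kummerRatio k b z e = e := by
  rw [kummerM_neg_add, mul_eq_zero_iff_left (by positivity), sub_eq_zero, kummerRatio,
    div_eq_iff htail]

lemma abs_kummerTail_sub_le (hb : 1 ≤ b) (hz : 1 ≤ z) (he : |e| ≤ 1 / 2) (hf : |f| ≤ 1 / 2) :
    |kummerTail k b z e - kummerTail k b z f| ≤
      (k + 1) * poch((2 : ℝ), k) * (z * Real.exp z) * |e - f| := by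
  have hz0 : 0 ≤ z := by linarith
  have habs {x : ℝ} (hx : |x| ≤ 1 / 2) : |1 + x| ≤ 2 :=
    (abs_add_le _ _).trans (by rw [abs_one]; linarith)
  have hpoch := abs_ascPochhammer_eval_le (habs he) k
  have hpochsub : |poch(1 + e, k) - poch(1 + f, k)| ≤ k * poch((2 : ℝ), k) * |e - f| := by
    simpa only [add_sub_add_left_eq_sub] using
      abs_ascPochhammer_eval_sub_le one_le_two (habs he) (habs hf) k
  have hpoch0 := ascPochhammer_pos k (2 : ℝ) two_pos
  have hsum : |kummerTailSum k b z f| ≤ z * Real.exp z := by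
    rw [abs_of_nonneg (kummerTailSum_nonneg k hb hz0 hf)]
    exact (kummerTailSum_le_exp k hb hz0 hf).trans (le_mul_of_one_le_left (Real.exp_nonneg z) hz)
  have hsumsub := abs_kummerTailSum_sub_le k hb hz0 he hf
  rw [kummerTail, kummerTail]
  calc |poch(1 + e, k) * kummerTailSum k b z e - poch(1 + f, k) * kummerTailSum k b z f|
      = |poch(1 + e, k) * (kummerTailSum k b z e - kummerTailSum k b z f) +
          (poch(1 + e, k) - poch(1 + f, k)) * kummerTailSum k b z f| := by ring_nf
    _ ≤ |poch(1 + e, k)| * |kummerTailSum k b z e - kummerTailSum k b z f| +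
          |poch(1 + e, k) - poch(1 + f, k)| * |kummerTailSum k b z f| := by
        rw [← abs_mul, ← abs_mul]
        exact abs_add_le _ _
    _ ≤ poch((2 : ℝ), k) * (z * Real.exp z * |e - f|) +
          k * poch((2 : ℝ), k) * |e - f| * (z * Real.exp z) := by gcongr
    _ = (k + 1) * poch((2 : ℝ), k) * (z * Real.exp z) * |e - f| := by ring

lemma exists_mul_exp_div_le_kummerTail (hν : 0 < ν) :
    ∃ c, 0 < c ∧ ∀ᶠ z in atTop, ∀ e, |e| ≤ 1 / 2 →
      c * (Real.exp z / z ^ (k + 2 + ν)) ≤ kummerTail k (1 + ν) z e := by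
  obtain ⟨C, hC, hbound⟩ :=
    (agreesToFirstOrder_kummerM_one hν).isEquivalent.isBigO_symm.exists_pos
  refine ⟨(1 / 2) ^ k * (Real.Gamma (1 + ν) / C / 4), by positivity, ?_⟩
  filter_upwards [hbound.bound, eventually_kummerM_one_div_four_le k (by linarith : 1 ≤ 1 + ν),
    eventually_gt_atTop 0] with z hM htail hz e he
  have hM0 := one_le_kummerM zero_le_one (by linarith : 0 < 1 + ν) hz.le
  rw [Real.norm_of_nonneg (by positivity), Real.norm_of_nonneg (by linarith), Real.exp_neg] at hM
  have he' : 1 / 2 ≤ 1 + e := by linarith [(abs_le.1 he).1]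
  have hpoch : (1 / 2) ^ k ≤ poch(1 + e, k) :=
    (pow_le_pow_left₀ (by norm_num) he' k).trans (pow_le_ascPochhammer_eval (by linarith) k)
  have hsum : Real.Gamma (1 + ν) / C / 4 * (Real.exp z / z ^ (k + 2 + ν)) ≤
      kummerTailSum k (1 + ν) z e := by
    rw [Real.rpow_add hz, show (k + 2 : ℝ) = (k + 2 : ℕ) by push_cast; rfl, Real.rpow_natCast]
    refine le_of_mul_le_mul_right (le_trans ?_ (htail e he)) (by positivity : 0 < z ^ (k + 2))
    calc Real.Gamma (1 + ν) / C / 4 * (Real.exp z / (z ^ (k + 2) * z ^ ν)) * z ^ (k + 2)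
        = Real.Gamma (1 + ν) / (z ^ ν * (Real.exp z)⁻¹) / C / 4 := by field_simp
      _ ≤ kummerM 1 (1 + ν) z / 4 := by
        gcongr
        exact (div_le_iff₀' hC).2 hM
  rw [kummerTail, mul_assoc]
  exact mul_le_mul hpoch hsum (by positivity) ((by positivity : (0 : ℝ) ≤ (1 / 2) ^ k).trans hpoch)

lemma eventually_abs_kummerRatio_le (hν : 0 < ν) :
    ∀ᶠ z in atTop, ∀ e, |e| ≤ 1 / 2 → |kummerRatio k (1 + ν) z e| ≤ z⁻¹ := by
  obtain ⟨c, hc, htail⟩ := exists_mul_exp_div_le_kummerTail k hν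
  set A := ∑ l ∈ Finset.range (k + 1), poch((k + 1 : ℝ), l)
  filter_upwards [htail, eventually_ge_atTop 1,
    eventually_mul_rpow_mul_exp_neg_le_inv (A / c) (k + (k + 2 + ν))] with z htail hz hsmall e he
  have hz0 : 0 < z := by linarith
  have hβ : 0 < c * (Real.exp z / z ^ (k + 2 + ν)) := by positivity
  have hhead : |kummerHead k (1 + ν) z e| ≤ A * z ^ k := abs_kummerHead_le k (by linarith) hz he
  rw [kummerRatio, abs_div, abs_of_pos (hβ.trans_le (htail e he))]
  calc |kummerHead k (1 + ν) z e| / kummerTail k (1 + ν) z e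
      ≤ A * z ^ k / (c * (Real.exp z / z ^ (k + 2 + ν))) :=
        div_le_div₀ ((abs_nonneg _).trans hhead) hhead hβ (htail e he)
    _ = A / c * (z ^ (k + (k + 2 + ν)) * Real.exp (-z)) := by
        rw [Real.rpow_add hz0 k, Real.rpow_natCast, Real.exp_neg]
        field_simp
    _ ≤ z⁻¹ := hsmall

lemma eventually_abs_kummerRatio_sub_le (hν : 0 < ν) :
    ∀ᶠ z in atTop, ∀ e f, |e| ≤ 1 / 2 → |f| ≤ 1 / 2 →
      |kummerRatio k (1 + ν) z e - kummerRatio k (1 + ν) z f| ≤ 2 * z⁻¹ * |e - f| := by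
  obtain ⟨c, hc, htail⟩ := exists_mul_exp_div_le_kummerTail k hν
  set A := ∑ l ∈ Finset.range (k + 1), poch((k + 1 : ℝ), l)
  set A' := ∑ l ∈ Finset.range (k + 1), l * poch((k + 1 : ℝ), l)
  set B := (k + 1) * poch((2 : ℝ), k)
  have hb : 1 ≤ 1 + ν := by linarith
  filter_upwards [htail, eventually_ge_atTop 1,
    eventually_mul_rpow_mul_exp_neg_le_inv (A' / c) (k + (k + 2 + ν)),
    eventually_mul_rpow_mul_exp_neg_le_inv (A * B / c ^ 2) (k + 1 + (k + 2 + ν) + (k + 2 + ν))]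
    with z htail hz hsmall' hsmall e f he hf
  have hz0 : 0 < z := by linarith
  have hβ : 0 < c * (Real.exp z / z ^ (k + 2 + ν)) := by positivity
  have hhead : |kummerHead k (1 + ν) z f| ≤ A * z ^ k := abs_kummerHead_le k hb hz hf
  have hhead' : |kummerHead k (1 + ν) z e - kummerHead k (1 + ν) z f| ≤ A' * z ^ k * |e - f| :=
    abs_kummerHead_sub_le k hb hz he hf
  have htail' : |kummerTail k (1 + ν) z e - kummerTail k (1 + ν) z f| ≤
      B * (z * Real.exp z) * |e - f| := abs_kummerTail_sub_le k hb hz he hf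
  rw [kummerRatio, kummerRatio]
  calc |kummerHead k (1 + ν) z e / kummerTail k (1 + ν) z e -
        kummerHead k (1 + ν) z f / kummerTail k (1 + ν) z f|
      ≤ A' * z ^ k * |e - f| / (c * (Real.exp z / z ^ (k + 2 + ν))) +
          A * z ^ k * (B * (z * Real.exp z) * |e - f|) /
            (c * (Real.exp z / z ^ (k + 2 + ν))) ^ 2 := by
        refine (abs_div_sub_div_le hβ (htail e he) (htail f hf)).trans ?_
        gcongr
        exact (abs_nonneg _).trans hhead
    _ = (A' / c * (z ^ (k + (k + 2 + ν)) * Real.exp (-z)) +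
          A * B / c ^ 2 * (z ^ (k + 1 + (k + 2 + ν) + (k + 2 + ν)) * Real.exp (-z))) *
            |e - f| := by
        rw [Real.rpow_add hz0 (k + 1 + (k + 2 + ν)), Real.rpow_add hz0 (k + 1),
          Real.rpow_add hz0 k (k + 2 + ν), Real.rpow_add_one hz0.ne', Real.rpow_natCast,
          Real.exp_neg]
        field_simp
    _ ≤ 2 * z⁻¹ * |e - f| := by
        gcongr
        linarith

lemma eventually_kummerTail_pos (hν : 0 < ν) :
    ∀ᶠ z in atTop, ∀ e, |e| ≤ 1 / 2 → 0 < kummerTail k (1 + ν) z e := by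
  obtain ⟨c, hc, htail⟩ := exists_mul_exp_div_le_kummerTail k hν
  filter_upwards [htail, eventually_gt_atTop 0] with z htail hz e he
  exact lt_of_lt_of_le (by positivity) (htail e he)

lemma agreesToFirstOrder_kummerRatio_zero (hν : 0 < ν) :
    AgreesToFirstOrder (fun z => kummerRatio k (1 + ν) z 0) (kummerZeroShift k ν) := by
  have hb : 1 ≤ 1 + ν := by linarith
  have htail := ((agreesToFirstOrder_kummerTailSum_zero k hb).trans
    (agreesToFirstOrder_kummerM_one hν)).inv <| by
      filter_upwards [eventually_gt_atTop 0] with z hz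
      positivity
  refine (((agreesToFirstOrder_kummerHead_zero k hb).mul htail).mul_left
    fun z => z ^ (k + 1) / k.factorial).congr' ?_ ?_
  · filter_upwards [eventually_gt_atTop 0] with z hz
    rw [kummerRatio, kummerTail, add_zero, ascPochhammer_eval_one]
    field_simp
  · filter_upwards with z
    rw [kummerZeroShift, add_right_comm, Gamma_add_natCast (by linarith)]
    field_simp
    ring

lemma exists_agreesToFirstOrder_kummerZeroShift (hν : 0 < ν) :
    ∃ e : ℝ → ℝ, AgreesToFirstOrder e (kummerZeroShift k ν) ∧ ∀ᶠ z in atTop,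
      |e z| < 1 / 2 ∧ kummerM (-(k + e z)) (1 + ν) z = 0 ∧
      ∀ f, |f| ≤ 1 / 2 → kummerM (-(k + f)) (1 + ν) z = 0 → f = e z := by
  have hfixed : ∀ᶠ z in atTop, ∃ e, |e| ≤ 1 / 2 ∧ kummerRatio k (1 + ν) z e = e ∧
      ∀ f, |f| ≤ 1 / 2 → kummerRatio k (1 + ν) z f = f → f = e := by
    filter_upwards [eventually_abs_kummerRatio_le k hν, eventually_abs_kummerRatio_sub_le k hν,
      eventually_gt_atTop 2] with z hle hlip hz
    have hinv : z⁻¹ < 2⁻¹ := inv_strictAnti₀ two_pos hz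
    exact exists_unique_fixedPt_of_lipschitz (κ := 2 * z⁻¹) (by norm_num) (by positivity)
      (by linarith) (fun e he => (hle e he).trans (by linarith)) hlip
  obtain ⟨e, he⟩ := hfixed.choice
  refine ⟨e, (AgreesToFirstOrder.symm ?_).trans (agreesToFirstOrder_kummerRatio_zero k hν), ?_⟩
  · refine IsBigO.of_bound 2 ?_
    filter_upwards [he, eventually_abs_kummerRatio_sub_le k hν, eventually_gt_atTop 0]
      with z ⟨hez, hfix, _⟩ hlip hz
    have hdist := hlip 0 (e z) (by norm_num) hez
    rw [hfix, zero_sub, abs_neg] at hdist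
    rw [Real.norm_eq_abs, norm_div, Real.norm_eq_abs, Real.norm_of_nonneg hz.le]
    exact hdist.trans_eq (by ring)
  · filter_upwards [he, eventually_abs_kummerRatio_le k hν, eventually_kummerTail_pos k hν,
      eventually_gt_atTop 2] with z ⟨hez, hfix, huniq⟩ hle htail hz
    refine ⟨?_, (kummerM_neg_add_eq_zero_iff k (htail _ hez).ne').2 hfix, fun f hf hzero =>
      huniq f hf ((kummerM_neg_add_eq_zero_iff k (htail f hf).ne').1 hzero)⟩
    rw [← hfix]
    exact (hle _ hez).trans_lt (by simpa using inv_strictAnti₀ two_pos hz)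

end Zeros

/-! ### Counting -/

namespace IsNthEig

variable {S : Set ℝ} {m : ℕ} {s t : ℝ}

lemma le (hs : IsNthEig S m s) (ht : IsNthEig S m t) : s ≤ t := by
  by_contra! hlt
  have hssubset : {x ∈ S | x < t} ⊂ {x ∈ S | x < s} :=
    ⟨fun x hx => ⟨hx.1, hx.2.trans hlt⟩, fun h => (h ⟨ht.1, hlt⟩).2.false⟩
  exact (ncard_lt_ncard hssubset hs.2.1).ne (ht.2.2.trans hs.2.2.symm)

lemma unique (hs : IsNthEig S m s) (ht : IsNthEig S m t) : s = t :=
  le_antisymm (hs.le ht) (ht.le hs)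

lemma image (hs : IsNthEig S m s) {g : ℝ → ℝ} (hg : StrictMono g) :
    IsNthEig (g '' S) m (g s) := by
  obtain ⟨hmem, hfin, hcard⟩ := hs
  have himage : {x ∈ g '' S | x < g s} = g '' {x ∈ S | x < s} := by
    ext x
    constructor
    · rintro ⟨⟨y, hy, rfl⟩, hlt⟩
      exact ⟨y, ⟨hy, hg.lt_iff_lt.1 hlt⟩, rfl⟩
    · rintro ⟨y, ⟨hy, hlt⟩, rfl⟩
      exact ⟨⟨y, hy, rfl⟩, hg hlt⟩
  refine ⟨mem_image_of_mem g hmem, ?_, ?_⟩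
  · rw [himage]
    exact hfin.image g
  · rw [himage, ncard_image_of_injective _ hg.injective, hcard]

end IsNthEig

lemma isNthEig_natCast_add {S : Set ℝ} {m : ℕ} {e : ℕ → ℝ} (hpos : ∀ s ∈ S, 0 < s)
    (he : ∀ k ≤ m, |e k| < 1 / 2) (hmem : ∀ k ≤ m, (k : ℝ) + e k ∈ S)
    (huniq : ∀ k ≤ m, ∀ f, |f| ≤ 1 / 2 → (k : ℝ) + f ∈ S → f = e k) :
    IsNthEig S m (m + e m) := by
  have hmono : StrictMonoOn (fun k : ℕ => (k : ℝ) + e k) (Iic m) := fun j hj k hk hjk => by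
    have hjk' : (j : ℝ) + 1 ≤ k := mod_cast hjk
    linarith [(abs_lt.1 (he j hj)).2, (abs_lt.1 (he k hk)).1]
  have hbelow : {x ∈ S | x < m + e m} = (fun k : ℕ => (k : ℝ) + e k) '' Iio m := by
    ext x
    constructor
    · rintro ⟨hx, hlt⟩
      have hx0 := hpos x hx
      have hfloor_le := Nat.floor_le (by linarith : 0 ≤ x + 1 / 2)
      have hlt_floor := Nat.lt_floor_add_one (x + 1 / 2)
      set k := ⌊x + 1 / 2⌋₊
      have hk : k ≤ m := by
        have : (k : ℝ) < m + 1 := by linarith [(abs_lt.1 (he m le_rfl)).2]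
        exact Nat.lt_succ_iff.1 (mod_cast this)
      have hxk : x = k + e k := by
        linarith [huniq k hk (x - k) (abs_le.2 ⟨by linarith, by linarith⟩) (by simpa using hx)]
      refine ⟨k, hk.lt_of_ne fun hkm => ?_, hxk.symm⟩
      rw [hxk, hkm] at hlt
      exact hlt.false
    · rintro ⟨k, hk, rfl⟩
      have hk : k < m := hk
      exact ⟨hmem k hk.le, hmono hk.le self_mem_Iic hk⟩
  refine ⟨hmem m le_rfl, ?_, ?_⟩
  · rw [hbelow]
    exact (finite_Iio m).image _
  · rw [hbelow, (hmono.injOn.mono Iio_subset_Iic_self).ncard_image, ← Finset.coe_Iio,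
      ncard_coe_finset, Nat.card_Iio]

lemma exists_isNthEig_zeros_kummerM {ν : ℝ} (hν : 0 < ν) (m : ℕ) :
    ∃ e : ℝ → ℝ, AgreesToFirstOrder e (kummerZeroShift m ν) ∧
      ∀ᶠ z in atTop, IsNthEig {s | kummerM (-s) (1 + ν) z = 0} m (m + e z) := by
  choose e hagrees hzero using fun k : ℕ => exists_agreesToFirstOrder_kummerZeroShift k hν
  refine ⟨e m, hagrees m, ?_⟩
  filter_upwards [(finite_Iic m).eventually_all.2 fun k _ => hzero k, eventually_ge_atTop 0]
    with z hzero hz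
  refine isNthEig_natCast_add (e := fun k => e k z) (fun s (hs : _ = _) => ?_)
    (fun k hk => (hzero k hk).1) (fun k hk => (hzero k hk).2.1) fun k hk => (hzero k hk).2.2
  by_contra! hneg
  linarith [one_le_kummerM (neg_nonneg.2 hneg) (by linarith : 0 < 1 + ν) hz]

lemma isNthEig_isEigQD_sq {ν L h s : ℝ} {m : ℕ} (hν : -(1 / 2) < ν) (hL : 0 < L) (hh : 0 < h)
    (hs : IsNthEig {s | kummerM (-s) (1 + ν) (L ^ 2 / h) = 0} m s) :
    IsNthEig {lam | IsEigQD (fun x : ℝ => x ^ 2) ν L h lam} m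
      (4 * h * s + 2 * h * (1 + ν)) := by
  rw [setOf_isEigQD_sq hν hL hh]
  refine hs.image fun s t hst => ?_
  gcongr

lemma four_mul_mul_kummerZeroShift (m : ℕ) (ν : ℝ) {h L : ℝ} (hh : 0 < h) (hL : 0 < L) :
    4 * h * kummerZeroShift m ν (L ^ 2 / h) =
      4 / ((Nat.factorial m : ℝ) * Real.Gamma (1 + m + ν)) *
        h ^ (-2 * (m : ℝ) - ν) * L ^ (2 * (2 * (m : ℝ) + 1 + ν)) * Real.exp (-L ^ 2 / h) := by
  have hLpow : L ^ (2 * (2 * (m : ℝ) + 1 + ν)) = (L ^ 2) ^ (2 * m + 1) * (L ^ 2) ^ ν := by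
    rw [← Real.rpow_natCast (L ^ 2) (2 * m + 1), ← Real.rpow_add (by positivity),
      ← Real.rpow_natCast L 2, ← Real.rpow_mul hL.le]
    push_cast
    rfl
  have hhpow : h ^ (-2 * (m : ℝ) - ν) = h / (h ^ (2 * m + 1) * h ^ ν) := by
    rw [show -2 * (m : ℝ) - ν = 1 - ((2 * m + 1 : ℕ) + ν) by push_cast; ring, Real.rpow_sub hh,
      Real.rpow_add hh, Real.rpow_natCast, Real.rpow_one]
  rw [kummerZeroShift, hLpow, hhpow, Real.div_rpow (by positivity) hh.le, div_pow, neg_div]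
  ring

lemma kummerZeroShift_nonneg {k : ℕ} {ν z : ℝ} (hν : 0 ≤ ν) (hz : 0 ≤ z) :
    0 ≤ kummerZeroShift k ν z := by
  rw [kummerZeroShift]
  positivity

theorem confined_isotropic_harmonic_oscillator
    (m : ℕ) (ν : ℝ) (hν : 0 < ν)
    (lamΛ : ℝ → ℝ → ℝ)
    (hlamΛ : ∀ h L : ℝ, 0 < h → 0 < L →
      IsNthEig {lam | IsEigQD (fun x : ℝ => x ^ 2) ν L h lam} m (lamΛ h L)) :
    ∃ C δ : ℝ, 0 < C ∧ 0 < δ ∧ ∀ h L : ℝ, 0 < h → 0 < L → h / L ^ 2 < δ →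
      |lamΛ h L - 2 * (2 * m + 1 + ν) * h -
          4 / ((Nat.factorial m : ℝ) * Real.Gamma (1 + m + ν)) *
            h ^ (-2 * (m : ℝ) - ν) * L ^ (2 * (2 * (m : ℝ) + 1 + ν)) * Real.exp (-L ^ 2 / h)| ≤
        C * (h / L ^ 2) *
          (4 / ((Nat.factorial m : ℝ) * Real.Gamma (1 + m + ν)) *
            h ^ (-2 * (m : ℝ) - ν) * L ^ (2 * (2 * (m : ℝ) + 1 + ν)) * Real.exp (-L ^ 2 / h)) := by
  obtain ⟨e, hagrees, hnth⟩ := exists_isNthEig_zeros_kummerM hν m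
  obtain ⟨C, hC, hbound⟩ := hagrees.exists_pos
  obtain ⟨δ, hδ, hsmall⟩ := mem_nhdsGT_iff_exists_Ioo_subset.1
    (tendsto_inv_nhdsGT_zero.eventually (hnth.and hbound.bound))
  refine ⟨C, δ, hC, hδ, fun h L hh hL hlt => ?_⟩
  obtain ⟨hnth, hbound⟩ : _ ∧ _ := hsmall ⟨by positivity, hlt⟩
  rw [inv_div] at hnth hbound
  have hlam := (hlamΛ h L hh hL).unique (isNthEig_isEigQD_sq (by linarith) hL hh hnth)
  have hdiff : lamΛ h L - 2 * (2 * m + 1 + ν) * h - 4 * h * kummerZeroShift m ν (L ^ 2 / h) =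
      4 * h * (e (L ^ 2 / h) - kummerZeroShift m ν (L ^ 2 / h)) := by
    rw [hlam]
    ring
  have hnonneg : 0 ≤ kummerZeroShift m ν (L ^ 2 / h) / (L ^ 2 / h) :=
    div_nonneg (kummerZeroShift_nonneg hν.le (by positivity)) (by positivity)
  rw [Real.norm_eq_abs, Real.norm_of_nonneg hnonneg] at hbound
  rw [← four_mul_mul_kummerZeroShift m ν hh hL, hdiff, abs_mul, abs_of_pos (by positivity)]
  calc 4 * h * |e (L ^ 2 / h) - kummerZeroShift m ν (L ^ 2 / h)|
      ≤ 4 * h * (C * (kummerZeroShift m ν (L ^ 2 / h) / (L ^ 2 / h))) := by gcongr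
    _ = C * (h / L ^ 2) * (4 * h * kummerZeroShift m ν (L ^ 2 / h)) := by field_simp
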